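/- Let N ≥ 2, α > 1, p > 0 and set ξ = (αp)^{-1/α}. For every η > 0 with η ≠ ξ there exists a unique positive function h ∈ C²([0,∞)) with h(0) = η, h'(0) = 0 satisfying h'' + ((N-1)/r)h' = (1/α)h^{-α} − p on (0,∞). The set of positive critical points of h is an infinite set which can be enumerated as a strictly increasing sequence (r_k^{p,η})_{k≥1} tending to infinity, satisfying r_1^{p,η} ≥ sqrt( 2Nα(η−ξ) / (ξ^{-α} − η^{-α}) ) and lim_{k→∞} ( r_{k+1}^{p,η} − r_k^{p,η} ) = π (αp)^{-(1+α)/(2α)}. Consequently, for each k the restriction of h to [0, r_k^{p,η}] is a smooth radial solution of Δh = (1/α)h^{-α} − p in B_{r_k^{p,η}}(0) with Neumann boundary condition and h(0) = η, and it is the unique smooth radial solution with these properties. -/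

import Mathlib

open Set Filter

noncomputable section

/-- A positive `C²` function on `[0, ∞)` solving the radial equation
`h'' + ((N-1)/r) h' = (1/α) h^(-α) - p` on `(0, ∞)` with `h(0) = η` and `h'(0) = 0`. -/
def IsGlobalSol (N : ℕ) (α p η : ℝ) (h : ℝ → ℝ) : Prop :=
  (∀ r ∈ Ici (0 : ℝ), 0 < h r) ∧
  ContDiffOn ℝ 2 h (Ici 0) ∧
  h 0 = η ∧
  derivWithin h (Ici 0) 0 = 0 ∧
  (∀ r ∈ Ioi (0 : ℝ),
    deriv (deriv h) r + ((N : ℝ) - 1) / r * deriv h r = 1 / α * h r ^ (-α) - p)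

/-- A smooth radial solution of `Δh = (1/α) h^(-α) - p` in `B_R(0)` with Neumann
boundary conditions: a positive `C²` function on `[0, R]` solving the radial ODE
on `(0, R)` with `h'(0) = h'(R) = 0`. -/
def IsNeumannSol (N : ℕ) (α p R : ℝ) (h : ℝ → ℝ) : Prop :=
  (∀ r ∈ Icc (0 : ℝ) R, 0 < h r) ∧
  ContDiffOn ℝ 2 h (Icc 0 R) ∧
  (∀ r ∈ Ioo (0 : ℝ) R,
    deriv (deriv h) r + ((N : ℝ) - 1) / r * deriv h r = 1 / α * h r ^ (-α) - p) ∧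
  derivWithin h (Icc 0 R) 0 = 0 ∧
  derivWithin h (Icc 0 R) R = 0

/-!
Write the equation as `h'' + (n/r) h' = G(h)` with `n = N - 1`. The force `G` is decreasing,
vanishes at `ξ`, and its potential energy blows up at `0`. Since the friction term makes the
energy `h'² / 2 + ∫ₕ^ξ G` decrease, `h` stays in a compact subset of `(0, ∞)`; hence `G` may be
replaced by a globally Lipschitz force, for which the integral equation is a contraction in a
weighted supremum norm. Uniqueness is a Gronwall estimate, as the friction has the good sign near
the singular point `r = 0`. Correcting the energy by a multiple of `(h - ξ) h' / r` shows that it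
tends to `0`, so that `h → ξ`. Then `z = r ^ (n / 2) h'` satisfies `z'' = -Q z` with
`Q → -G'(ξ) = (αp) ^ ((1 + α) / α)`, and Sturm comparison with `sin (m r)` for `m` on either side
of `√(-G'(ξ))` yields the zeros of `h'` and the limit of their gaps. The lower bound for the first
zero comes from integrating `(rⁿ h')' = rⁿ G(h)` with `G(h)` bounded by `G(η)` in absolute value.
-/

/-! ### The radial Laplacian -/

section RadialLaplacian

/-- The weighted mean `A(t) = t⁻⁽ⁿ⁺¹⁾ ∫₀ᵗ sⁿ f(s) ds`, in a form that makes sense at `t = 0`. If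
`u'' + (n/r) u' = f` and `u'(0) = 0`, then `u'(t) = t A(t)`. -/
def radialMean (n : ℕ) (f : ℝ → ℝ) (t : ℝ) : ℝ :=
  ∫ σ in (0 : ℝ)..1, σ ^ n * f (t * σ)

/-- The solution of `u'' + (n/r) u' = f` with `u(0) = u'(0) = 0`. -/
def invRadialLaplacian (n : ℕ) (f : ℝ → ℝ) (r : ℝ) : ℝ :=
  ∫ t in (0 : ℝ)..r, t * radialMean n f t

variable {n : ℕ} {f g : ℝ → ℝ} {t : ℝ}

theorem continuous_radialMean (hf : Continuous f) : Continuous (radialMean n f) := by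
  unfold radialMean
  apply intervalIntegral.continuous_parametric_intervalIntegral_of_continuous'
  fun_prop

theorem radialMean_const (n : ℕ) (c t : ℝ) : radialMean n (fun _ => c) t = c / (n + 1) := by
  simp [radialMean, intervalIntegral.integral_mul_const, integral_pow, inv_mul_eq_div]

theorem radialMean_zero (n : ℕ) (f : ℝ → ℝ) : radialMean n f 0 = f 0 / (n + 1) := by
  rw [← radialMean_const n (f 0) 0]
  simp only [radialMean, zero_mul]

theorem radialMean_const_mul (n : ℕ) (c : ℝ) (f : ℝ → ℝ) (t : ℝ) :
    radialMean n (fun s => c * f s) t = c * radialMean n f t := by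
  simp only [radialMean, mul_left_comm _ c, intervalIntegral.integral_const_mul]

theorem radialMean_sub (hf : Continuous f) (hg : Continuous g) :
    radialMean n (fun s => f s - g s) t = radialMean n f t - radialMean n g t := by
  simp only [radialMean, mul_sub]
  exact intervalIntegral.integral_sub (Continuous.intervalIntegrable (by fun_prop) _ _)
    (Continuous.intervalIntegrable (by fun_prop) _ _)

theorem radialMean_le_of_le {c : ℝ} (hf : Continuous f) (ht : 0 ≤ t)
    (hc : ∀ s ∈ Icc 0 t, f s ≤ c) : radialMean n f t ≤ c / (n + 1) := by
  rw [← radialMean_const n c t]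
  refine intervalIntegral.integral_mono_on zero_le_one
    (Continuous.intervalIntegrable (by fun_prop) _ _)
    (Continuous.intervalIntegrable (by fun_prop) _ _) fun σ hσ => ?_
  exact mul_le_mul_of_nonneg_left
    (hc _ ⟨mul_nonneg ht hσ.1, mul_le_of_le_one_right ht hσ.2⟩) (pow_nonneg hσ.1 n)

theorem radialMean_pos (hf : Continuous f) (ht : 0 ≤ t) (hpos : ∀ s ∈ Icc 0 t, 0 < f s) :
    0 < radialMean n f t :=
  intervalIntegral.intervalIntegral_pos_of_pos_on
    (Continuous.intervalIntegrable (by fun_prop) _ _)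
    (fun _ hσ => mul_pos (pow_pos hσ.1 n)
      (hpos _ ⟨mul_nonneg ht hσ.1.le, mul_le_of_le_one_right ht hσ.2.le⟩)) zero_lt_one

theorem abs_radialMean_le {C : ℝ} (hC : ∀ s, |s| ≤ |t| → |f s| ≤ C) : |radialMean n f t| ≤ C := by
  have hbound : ∀ σ ∈ uIoc (0 : ℝ) 1, ‖σ ^ n * f (t * σ)‖ ≤ C := by
    intro σ hσ
    rw [uIoc_of_le zero_le_one] at hσ
    have hσ1 : |σ| ≤ 1 := abs_le.2 ⟨by linarith [hσ.1], hσ.2⟩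
    have hts : |t * σ| ≤ |t| := by
      rw [abs_mul]
      exact mul_le_of_le_one_right (abs_nonneg t) hσ1
    rw [norm_mul, norm_pow]
    exact (mul_le_of_le_one_left (norm_nonneg _) (pow_le_one₀ (norm_nonneg σ) hσ1)).trans
      (hC _ hts)
  simpa [radialMean] using intervalIntegral.norm_integral_le_of_norm_le_const hbound

theorem pow_succ_mul_radialMean (n : ℕ) (f : ℝ → ℝ) (t : ℝ) :
    t ^ (n + 1) * radialMean n f t = ∫ s in (0 : ℝ)..t, s ^ n * f s := by
  have hsubst := intervalIntegral.mul_integral_comp_mul_left (a := 0) (b := 1)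
    (f := fun s => s ^ n * f s) t
  simp only [mul_zero, mul_one, mul_pow, mul_assoc, intervalIntegral.integral_const_mul] at hsubst
  rw [← hsubst, pow_succ', mul_assoc, radialMean]

theorem hasDerivAt_mul_radialMean (n : ℕ) (hf : Continuous f) (t : ℝ) :
    HasDerivAt (fun t => t * radialMean n f t) (f t - n * radialMean n f t) t := by
  rcases eq_or_ne t 0 with rfl | ht
  · have hmean : f 0 - n * radialMean n f 0 = radialMean n f 0 := by
      rw [radialMean_zero]
      field_simp
      ring
    rw [hmean, hasDerivAt_iff_tendsto_slope_zero]
    refine (((continuous_radialMean hf).tendsto 0).mono_left nhdsWithin_le_nhds).congr' ?_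
    filter_upwards [self_mem_nhdsWithin] with x (hx : x ≠ 0)
    simp [hx]
  · have hquot := ((Continuous.integral_hasStrictDerivAt (f := fun s => s ^ n * f s)
      (by fun_prop) 0 t).hasDerivAt).div (hasDerivAt_pow n t) (pow_ne_zero n ht)
    have heq : (fun t => t * radialMean n f t) =ᶠ[nhds t]
        (fun u => ∫ s in (0 : ℝ)..u, s ^ n * f s) / fun s => s ^ n := by
      filter_upwards [isOpen_ne.mem_nhds ht] with s (hs : s ≠ 0)
      rw [Pi.div_apply, ← pow_succ_mul_radialMean]
      field_simp
      ring
    refine (hquot.congr_of_eventuallyEq heq).congr_deriv ?_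
    rw [← pow_succ_mul_radialMean]
    cases n with
    | zero => simp
    | succ m =>
      simp only [Nat.add_sub_cancel]
      field_simp
      push_cast
      ring

theorem invRadialLaplacian_zero (n : ℕ) (f : ℝ → ℝ) : invRadialLaplacian n f 0 = 0 :=
  intervalIntegral.integral_same

theorem hasDerivAt_invRadialLaplacian (n : ℕ) (hf : Continuous f) (r : ℝ) :
    HasDerivAt (invRadialLaplacian n f) (r * radialMean n f r) r :=
  ((continuous_id.mul (continuous_radialMean hf)).integral_hasStrictDerivAt 0 r).hasDerivAt

theorem continuous_invRadialLaplacian (n : ℕ) (hf : Continuous f) :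
    Continuous (invRadialLaplacian n f) :=
  continuous_iff_continuousAt.2 fun r => (hasDerivAt_invRadialLaplacian n hf r).continuousAt

theorem invRadialLaplacian_sub (hf : Continuous f) (hg : Continuous g) (r : ℝ) :
    invRadialLaplacian n (fun s => f s - g s) r =
      invRadialLaplacian n f r - invRadialLaplacian n g r := by
  have hf' := continuous_radialMean (n := n) hf
  have hg' := continuous_radialMean (n := n) hg
  simp only [invRadialLaplacian, radialMean_sub hf hg, mul_sub]
  exact intervalIntegral.integral_sub (Continuous.intervalIntegrable (by fun_prop) _ _)
    (Continuous.intervalIntegrable (by fun_prop) _ _)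

theorem integral_sq_mul_exp_le {l : ℝ} (hl : 0 < l) (r : ℝ) :
    ∫ τ in (0 : ℝ)..1, r ^ 2 * τ * Real.exp (l * (r * τ) ^ 2) ≤
      Real.exp (l * r ^ 2) / (2 * l) := by
  have hderiv : ∀ τ ∈ uIcc (0 : ℝ) 1,
      HasDerivAt (fun τ => Real.exp (l * (r * τ) ^ 2) / (2 * l))
        (r ^ 2 * τ * Real.exp (l * (r * τ) ^ 2)) τ := by
    intro τ _
    have hexponent := (((hasDerivAt_id τ).const_mul r).pow 2).const_mul l
    refine (hexponent.exp.div_const (2 * l)).congr_deriv ?_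
    simp only [id, Pi.pow_apply]
    field_simp
    norm_num
    ring
  rw [intervalIntegral.integral_eq_sub_of_hasDerivAt hderiv
    (Continuous.intervalIntegrable (by fun_prop) _ _), mul_one]
  exact sub_le_self _ (by positivity)

theorem invRadialLaplacian_eq_integral (n : ℕ) (f : ℝ → ℝ) (r : ℝ) :
    invRadialLaplacian n f r = ∫ τ in (0 : ℝ)..1, r ^ 2 * τ * radialMean n f (r * τ) := by
  have hsubst := intervalIntegral.mul_integral_comp_mul_left (a := 0) (b := 1)
    (f := fun t => t * radialMean n f t) r
  rw [mul_zero, mul_one] at hsubst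
  rw [invRadialLaplacian, ← hsubst, ← intervalIntegral.integral_const_mul]
  congr 1 with τ
  ring

theorem abs_invRadialLaplacian_le {D l : ℝ} (hl : 0 < l)
    (hf : ∀ s, |f s| ≤ D * Real.exp (l * s ^ 2)) (r : ℝ) :
    |invRadialLaplacian n f r| ≤ D / (2 * l) * Real.exp (l * r ^ 2) := by
  have hD : 0 ≤ D := by simpa using (abs_nonneg _).trans (hf 0)
  have hmean : ∀ t, |radialMean n f t| ≤ D * Real.exp (l * t ^ 2) := fun t =>
    abs_radialMean_le fun s hs => (hf s).trans <| by gcongr 1; gcongr 2; exact sq_le_sq.2 hs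
  have hbound : ∀ τ ∈ Ioc (0 : ℝ) 1, ‖r ^ 2 * τ * radialMean n f (r * τ)‖ ≤
      D * (r ^ 2 * τ * Real.exp (l * (r * τ) ^ 2)) := by
    intro τ hτ
    have hnonneg : 0 ≤ r ^ 2 * τ := mul_nonneg (sq_nonneg r) hτ.1.le
    rw [Real.norm_eq_abs, abs_mul, abs_of_nonneg hnonneg, mul_left_comm]
    exact mul_le_mul_of_nonneg_left (hmean _) hnonneg
  rw [invRadialLaplacian_eq_integral]
  calc _ ≤ ∫ τ in (0 : ℝ)..1, D * (r ^ 2 * τ * Real.exp (l * (r * τ) ^ 2)) :=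
        intervalIntegral.norm_integral_le_of_norm_le zero_le_one (Eventually.of_forall hbound)
          (Continuous.intervalIntegrable (by fun_prop) _ _)
    _ ≤ D * (Real.exp (l * r ^ 2) / (2 * l)) := by
        rw [intervalIntegral.integral_const_mul]
        exact mul_le_mul_of_nonneg_left (integral_sq_mul_exp_le hl r) hD
    _ = _ := by ring

end RadialLaplacian

/-! ### Global existence for Lipschitz forces -/

section Existence

/-- `h'' + (n/r) h' = φ(h)` on the whole line with `h'(0) = 0`, in the integrated form
`h'(t) = t⁻ⁿ ∫₀ᵗ sⁿ φ(h(s)) ds`, which is not singular at the origin. -/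
structure IsRadialSol (n : ℕ) (φ h : ℝ → ℝ) : Prop where
  continuous_comp : Continuous (φ ∘ h)
  hasDerivAt : ∀ t, HasDerivAt h (t * radialMean n (φ ∘ h) t) t

/-- The space `{v | v - η = O(exp (l s²))}`, parametrised by bounded continuous functions `u`; its
norm makes the Picard iteration for `IsRadialSol` a contraction on the whole line at once. -/
def gaussianLift (η l : ℝ) (u : BoundedContinuousFunction ℝ ℝ) (s : ℝ) : ℝ :=
  η + Real.exp (l * s ^ 2) * u s

theorem continuous_gaussianLift (η l : ℝ) (u : BoundedContinuousFunction ℝ ℝ) :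
    Continuous (gaussianLift η l u) := by
  have := u.continuous
  unfold gaussianLift
  fun_prop

theorem abs_gaussianLift_sub_le (η l : ℝ) (u v : BoundedContinuousFunction ℝ ℝ) (s : ℝ) :
    |gaussianLift η l u s - gaussianLift η l v s| ≤ dist u v * Real.exp (l * s ^ 2) := by
  rw [gaussianLift, gaussianLift, add_sub_add_left_eq_sub, ← mul_sub, abs_mul, Real.abs_exp,
    mul_comm, ← Real.dist_eq]
  gcongr
  exact BoundedContinuousFunction.dist_coe_le_dist s

variable {φ : ℝ → ℝ} {K l : NNReal}

theorem abs_comp_gaussianLift_sub_le (hφ : LipschitzWith K φ) (η l : ℝ)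
    (u v : BoundedContinuousFunction ℝ ℝ) (s : ℝ) :
    |φ (gaussianLift η l u s) - φ (gaussianLift η l v s)| ≤
      K * dist u v * Real.exp (l * s ^ 2) := by
  rw [mul_assoc]
  exact (hφ.dist_le_mul _ _).trans
    (mul_le_mul_of_nonneg_left (abs_gaussianLift_sub_le η l u v s) K.coe_nonneg)

theorem abs_comp_gaussianLift_le (hφ : LipschitzWith K φ) (hl : 0 < l) (η : ℝ)
    (u : BoundedContinuousFunction ℝ ℝ) (s : ℝ) :
    |φ (gaussianLift η l u s)| ≤ (|φ η| + K * ‖u‖) * Real.exp (l * s ^ 2) := by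
  have hdiff := abs_comp_gaussianLift_sub_le hφ η l u 0 s
  rw [dist_zero_right, gaussianLift, gaussianLift, BoundedContinuousFunction.coe_zero,
    Pi.zero_apply, mul_zero, add_zero] at hdiff
  calc |φ (gaussianLift η l u s)|
      ≤ |φ η| + |φ (gaussianLift η l u s) - φ η| := by
        simpa using abs_add_le (φ η) (φ (gaussianLift η l u s) - φ η)
    _ ≤ |φ η| * Real.exp (l * s ^ 2) + K * ‖u‖ * Real.exp (l * s ^ 2) :=
        add_le_add (le_mul_of_one_le_right (abs_nonneg _) (Real.one_le_exp (by positivity))) hdiff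
    _ = _ := (add_mul ..).symm

/-- The Picard map `v ↦ η + Δ⁻¹ φ(v)` in the coordinates of `gaussianLift`. -/
def radialPicard (n : ℕ) (hφ : LipschitzWith K φ) (η : ℝ) (hl : 0 < l)
    (u : BoundedContinuousFunction ℝ ℝ) : BoundedContinuousFunction ℝ ℝ :=
  BoundedContinuousFunction.ofNormedAddCommGroup
    (fun r => Real.exp (-(l * r ^ 2)) * invRadialLaplacian n (φ ∘ gaussianLift η l u) r)
    (by
      have := continuous_invRadialLaplacian n (hφ.continuous.comp (continuous_gaussianLift η l u))
      fun_prop)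
    ((|φ η| + K * ‖u‖) / (2 * l))
    (fun r => by
      rw [norm_mul, Real.norm_eq_abs, Real.norm_eq_abs, Real.abs_exp, Real.exp_neg,
        inv_mul_le_iff₀ (Real.exp_pos _), mul_comm]
      exact abs_invRadialLaplacian_le hl (abs_comp_gaussianLift_le hφ hl η u) r)

theorem lipschitzWith_radialPicard (n : ℕ) (hφ : LipschitzWith K φ) (η : ℝ) (hl : 0 < l) :
    LipschitzWith (K / (2 * l)) (radialPicard n hφ η hl) := by
  refine LipschitzWith.of_dist_le_mul fun u v => ?_
  rw [BoundedContinuousFunction.dist_le (by positivity)]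
  intro r
  have hcont := fun w => hφ.continuous.comp (continuous_gaussianLift η l w)
  have hdiff := abs_invRadialLaplacian_le (n := n) hl (abs_comp_gaussianLift_sub_le hφ η l u v) r
  rw [show (fun s => φ (gaussianLift η l u s) - φ (gaussianLift η l v s)) =
    fun s => (φ ∘ gaussianLift η l u) s - (φ ∘ gaussianLift η l v) s from rfl,
    invRadialLaplacian_sub (hcont u) (hcont v)] at hdiff
  simp only [radialPicard, BoundedContinuousFunction.coe_ofNormedAddCommGroup, Real.dist_eq]
  rw [← mul_sub, abs_mul, Real.abs_exp, Real.exp_neg, inv_mul_le_iff₀ (Real.exp_pos _), mul_comm]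
  refine hdiff.trans_eq ?_
  rw [NNReal.coe_div, NNReal.coe_mul, NNReal.coe_ofNat, mul_div_right_comm]
  rfl

theorem exists_isRadialSol (n : ℕ) (hφ : LipschitzWith K φ) (η : ℝ) :
    ∃ h, h 0 = η ∧ IsRadialSol n φ h := by
  have hl : 0 < K + 1 := by positivity
  have hcontract : ContractingWith (K / (2 * (K + 1))) (radialPicard n hφ η hl) := by
    refine ⟨?_, lipschitzWith_radialPicard n hφ η hl⟩
    rw [div_lt_one (by positivity), two_mul]
    exact (lt_add_one K).trans_le le_self_add
  set u := hcontract.fixedPoint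
  have hfixed : ∀ r, Real.exp (-((K + 1) * r ^ 2)) *
      invRadialLaplacian n (φ ∘ gaussianLift η (K + 1) u) r = u r := fun r =>
    DFunLike.congr_fun hcontract.fixedPoint_isFixedPt r
  have hcont := continuous_gaussianLift η (K + 1) u
  have heq : gaussianLift η (K + 1) u =
      fun r => η + invRadialLaplacian n (φ ∘ gaussianLift η (K + 1) u) r := by
    ext r
    rw [gaussianLift, ← hfixed r, ← mul_assoc, ← Real.exp_add, add_neg_cancel, Real.exp_zero,
      one_mul]
  refine ⟨gaussianLift η (K + 1) u, ?_, hφ.continuous.comp hcont, fun t => ?_⟩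
  · exact (congr_fun heq 0).trans (by rw [invRadialLaplacian_zero, add_zero])
  · exact ((hasDerivAt_invRadialLaplacian n (hφ.continuous.comp hcont) t).const_add
      η).congr_of_eventuallyEq (Eventually.of_forall (congr_fun heq))

end Existence

/-! ### Uniqueness for locally Lipschitz forces -/

section Uniqueness

theorem le_zero_of_hasDerivAt_le_mul {y y' : ℝ → ℝ} {a b K : ℝ} (hc : ContinuousOn y (Icc a b))
    (hy : ∀ r ∈ Ioo a b, HasDerivAt y (y' r) r) (hle : ∀ r ∈ Ioo a b, y' r ≤ K * y r)
    (ha : y a ≤ 0) : ∀ r ∈ Icc a b, y r ≤ 0 := by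
  have hanti : AntitoneOn (fun r => Real.exp (-(K * r)) * y r) (Icc a b) := by
    refine antitoneOn_of_hasDerivWithinAt_nonpos (convex_Icc a b) (by fun_prop)
      (f' := fun r => Real.exp (-(K * r)) * (y' r - K * y r)) ?_ ?_ <;> rw [interior_Icc]
    · intro r hr
      refine ((((hasDerivAt_id r).const_mul K).neg.exp.mul (hy r hr)).congr_deriv
        ?_).hasDerivWithinAt
      simp only [id, mul_one, Pi.neg_apply]
      ring
    · exact fun r hr => mul_nonpos_of_nonneg_of_nonpos (Real.exp_pos _).le
        (sub_nonpos.2 (hle r hr))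
  intro r hr
  have hle_zero : Real.exp (-(K * r)) * y r ≤ 0 :=
    (hanti ⟨le_rfl, hr.1.trans hr.2⟩ hr hr.1).trans
      (mul_nonpos_of_nonneg_of_nonpos (Real.exp_pos _).le ha)
  exact nonpos_of_mul_nonpos_right hle_zero (Real.exp_pos _)

/-- A `C²` solution of `f'' + (n/r) f' = G(f)` on the ball of radius `R` with `f'(0) = 0`. -/
structure IsRadialSolOn (n : ℝ) (G : ℝ → ℝ) (R : ℝ) (f : ℝ → ℝ) : Prop where
  contDiffOn : ContDiffOn ℝ 2 f (Icc 0 R)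
  ode : ∀ r ∈ Ioo 0 R, deriv (deriv f) r + n / r * deriv f r = G (f r)
  derivWithin_zero : derivWithin f (Icc 0 R) 0 = 0

namespace IsRadialSolOn

variable {n R : ℝ} {G f g : ℝ → ℝ} {s : Set ℝ}

theorem derivWithin_eq {r : ℝ} (hr : r ∈ Ioo 0 R) : derivWithin f (Icc 0 R) r = deriv f r :=
  derivWithin_of_mem_nhds (Icc_mem_nhds hr.1 hr.2)

theorem hasDerivAt (hf : IsRadialSolOn n G R f) {r : ℝ} (hr : r ∈ Ioo 0 R) :
    HasDerivAt f (derivWithin f (Icc 0 R) r) r := by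
  rw [derivWithin_eq hr]
  exact ((hf.contDiffOn.differentiableOn two_ne_zero r (Ioo_subset_Icc_self hr)).differentiableAt
    (Icc_mem_nhds hr.1 hr.2)).hasDerivAt

theorem hasDerivAt_derivWithin (hf : IsRadialSolOn n G R f) {r : ℝ} (hr : r ∈ Ioo 0 R) :
    HasDerivAt (derivWithin f (Icc 0 R)) (G (f r) - n / r * derivWithin f (Icc 0 R) r) r := by
  have heq : derivWithin f (Icc 0 R) =ᶠ[nhds r] deriv f := by
    filter_upwards [isOpen_Ioo.mem_nhds hr] with s hs using derivWithin_eq hs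
  have hdiff : DifferentiableAt ℝ (deriv f) r :=
    (((hf.contDiffOn.mono Ioo_subset_Icc_self).deriv_of_isOpen isOpen_Ioo
      (by norm_num)).differentiableOn one_ne_zero r hr).differentiableAt (isOpen_Ioo.mem_nhds hr)
  refine (hdiff.hasDerivAt.congr_of_eventuallyEq heq).congr_deriv ?_
  rw [derivWithin_eq hr, ← hf.ode r hr, add_sub_cancel_right]

theorem continuousOn_derivWithin (hf : IsRadialSolOn n G R f) (hR : 0 < R) :
    ContinuousOn (derivWithin f (Icc 0 R)) (Icc 0 R) :=
  hf.contDiffOn.continuousOn_derivWithin (uniqueDiffOn_Icc hR) one_le_two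

-- The friction term `n/r` is singular at the origin, but it only helps: it contributes
-- `-2 (n/r) (f' - g')² ≤ 0` to the derivative of `(f - g)² + (f' - g')²`.
theorem eqOn (hf : IsRadialSolOn n G R f) (hg : IsRadialSolOn n G R g) (hn : 0 ≤ n) (hR : 0 < R)
    (hG : LocallyLipschitzOn s G) (hfs : MapsTo f (Icc 0 R) s) (hgs : MapsTo g (Icc 0 R) s)
    (h0 : f 0 = g 0) : EqOn f g (Icc 0 R) := by
  have hfc := hf.contDiffOn.continuousOn
  have hgc := hg.contDiffOn.continuousOn
  obtain ⟨L, hL⟩ := (hG.mono (union_subset hfs.image_subset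
    hgs.image_subset)).exists_lipschitzOnWith_of_compact
    ((isCompact_Icc.image_of_continuousOn hfc).union (isCompact_Icc.image_of_continuousOn hgc))
  set f' := derivWithin f (Icc 0 R)
  set g' := derivWithin g (Icc 0 R)
  have hfc' : ContinuousOn f' (Icc 0 R) := hf.continuousOn_derivWithin hR
  have hgc' : ContinuousOn g' (Icc 0 R) := hg.continuousOn_derivWithin hR
  have hle := le_zero_of_hasDerivAt_le_mul (y := fun r => (f r - g r) ^ 2 + (f' r - g' r) ^ 2)
    (K := 1 + L) (by fun_prop)
    (fun r hr => (((hf.hasDerivAt hr).sub (hg.hasDerivAt hr)).pow 2).add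
      (((hf.hasDerivAt_derivWithin hr).sub (hg.hasDerivAt_derivWithin hr)).pow 2)) ?_ ?_
  · intro r hr
    have hsq : (f r - g r) ^ 2 ≤ 0 := (le_add_of_nonneg_right (sq_nonneg _)).trans (hle r hr)
    exact sub_eq_zero.1 (pow_eq_zero_iff two_ne_zero |>.1 (hsq.antisymm (sq_nonneg _)))
  · intro r hr
    have hr' := Ioo_subset_Icc_self hr
    have hlip : |G (f r) - G (g r)| ≤ L * |f r - g r| :=
      hL.dist_le_mul _ (Or.inl (mem_image_of_mem f hr')) _ (Or.inr (mem_image_of_mem g hr'))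
    have hforce : (f' r - g' r) * (G (f r) - G (g r)) ≤ |f' r - g' r| * (L * |f r - g r|) :=
      (le_abs_self _).trans
        ((abs_mul _ _).trans_le (mul_le_mul_of_nonneg_left hlip (abs_nonneg _)))
    have hfriction : 0 ≤ n / r * (f' r - g' r) ^ 2 :=
      mul_nonneg (div_nonneg hn hr.1.le) (sq_nonneg _)
    have hamgm := mul_le_mul_of_nonneg_left (two_mul_le_add_sq |f r - g r| |f' r - g' r|)
      L.coe_nonneg
    rw [sq_abs, sq_abs] at hamgm
    simp only [Nat.cast_ofNat, Nat.add_one_sub_one, pow_one, Pi.sub_apply]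
    linear_combination hamgm + 2 * hforce + 2 * hfriction +
      two_mul_le_add_sq (f r - g r) (f' r - g' r)
  · simp only [h0, f', g', hf.derivWithin_zero, hg.derivWithin_zero, sub_self]
    norm_num

end IsRadialSolOn

end Uniqueness

/-! ### Regularity of radial solutions -/

namespace IsRadialSol

variable {n : ℕ} {φ h : ℝ → ℝ} {t : ℝ}

theorem deriv_eq (hh : IsRadialSol n φ h) (t : ℝ) : deriv h t = t * radialMean n (φ ∘ h) t :=
  (hh.hasDerivAt t).deriv

theorem deriv_zero (hh : IsRadialSol n φ h) : deriv h 0 = 0 := by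
  rw [hh.deriv_eq, zero_mul]

theorem differentiable (hh : IsRadialSol n φ h) : Differentiable ℝ h := fun t =>
  (hh.hasDerivAt t).differentiableAt

theorem hasDerivAt_deriv (hh : IsRadialSol n φ h) (ht : t ≠ 0) :
    HasDerivAt (deriv h) (φ (h t) - n / t * deriv h t) t := by
  rw [hh.deriv_eq, div_mul_eq_mul_div, mul_left_comm, mul_div_cancel_left₀ _ ht, funext hh.deriv_eq]
  exact hasDerivAt_mul_radialMean n hh.continuous_comp t

theorem hasDerivAt_deriv_zero (hh : IsRadialSol n φ h) :
    HasDerivAt (deriv h) (φ (h 0) / (n + 1)) 0 := by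
  refine (hasDerivAt_mul_radialMean n hh.continuous_comp 0).congr_deriv ?_ |>.congr_of_eventuallyEq
    (Eventually.of_forall hh.deriv_eq)
  rw [radialMean_zero, Function.comp_apply]
  field_simp
  ring

theorem continuous_deriv (hh : IsRadialSol n φ h) : Continuous (deriv h) := by
  rw [funext hh.deriv_eq]
  exact continuous_id.mul (continuous_radialMean hh.continuous_comp)

theorem contDiff (hh : IsRadialSol n φ h) : ContDiff ℝ 2 h := by
  have hderiv2 : deriv (deriv h) = fun t => (φ ∘ h) t - n * radialMean n (φ ∘ h) t := by
    ext t
    rw [funext hh.deriv_eq]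
    exact (hasDerivAt_mul_radialMean n hh.continuous_comp t).deriv
  have hmean := continuous_radialMean (n := n) hh.continuous_comp
  have hdiff : Differentiable ℝ (deriv h) := fun t => by
    rw [funext hh.deriv_eq]
    exact (hasDerivAt_mul_radialMean n hh.continuous_comp t).differentiableAt
  rw [show (2 : WithTop ℕ∞) = 1 + 1 by norm_num, contDiff_succ_iff_deriv,
    contDiff_one_iff_deriv, hderiv2]
  exact ⟨hh.differentiable, by simp, hdiff, hh.continuous_comp.sub (continuous_const.mul hmean)⟩

theorem ode (hh : IsRadialSol n φ h) (ht : t ≠ 0) :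
    deriv (deriv h) t + n / t * deriv h t = φ (h t) := by
  rw [(hh.hasDerivAt_deriv ht).deriv, sub_add_cancel]

end IsRadialSol

/-! ### Potential energy of a restoring force -/

section Energy

/-- The potential energy `∫ₓ^ξ φ` of the force `φ`, normalised to vanish at `ξ`. -/
def potential (φ : ℝ → ℝ) (ξ x : ℝ) : ℝ :=
  ∫ y in x..ξ, φ y

/-- A continuous force `φ` on the open interval `s` that pushes towards the equilibrium `ξ`. -/
structure IsRestoringOn (φ : ℝ → ℝ) (ξ : ℝ) (s : Set ℝ) : Prop where
  isOpen : IsOpen s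
  ordConnected : s.OrdConnected
  mem : ξ ∈ s
  continuousOn : ContinuousOn φ s
  pos_of_lt : ∀ x ∈ s, x < ξ → 0 < φ x
  neg_of_gt : ∀ x ∈ s, ξ < x → φ x < 0

theorem potential_self (φ : ℝ → ℝ) (ξ : ℝ) : potential φ ξ ξ = 0 :=
  intervalIntegral.integral_same

theorem hasDerivAt_potential {φ : ℝ → ℝ} {ξ x : ℝ} {s : Set ℝ} (hs : IsOpen s)
    (hconn : s.OrdConnected) (hφ : ContinuousOn φ s) (hx : x ∈ s) (hξ : ξ ∈ s) :
    HasDerivAt (potential φ ξ) (-φ x) x :=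
  intervalIntegral.integral_hasDerivAt_left
    ((hφ.mono (hconn.uIcc_subset hx hξ)).intervalIntegrable)
    (hφ.stronglyMeasurableAtFilter hs x hx) (hφ.continuousAt (hs.mem_nhds hx))

namespace IsRestoringOn

variable {φ : ℝ → ℝ} {ξ x : ℝ} {s : Set ℝ}

theorem apply_ne_zero (hφ : IsRestoringOn φ ξ s) (hx : x ∈ s) (hxξ : x ≠ ξ) : φ x ≠ 0 :=
  hxξ.lt_or_gt.elim (fun hlt => (hφ.pos_of_lt x hx hlt).ne') fun hgt => (hφ.neg_of_gt x hx hgt).ne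

theorem hasDerivAt_potential (hφ : IsRestoringOn φ ξ s) (hx : x ∈ s) :
    HasDerivAt (potential φ ξ) (-φ x) x :=
  _root_.hasDerivAt_potential hφ.isOpen hφ.ordConnected hφ.continuousOn hx hφ.mem

theorem continuousOn_potential (hφ : IsRestoringOn φ ξ s) : ContinuousOn (potential φ ξ) s :=
  fun _ hx => (hφ.hasDerivAt_potential hx).continuousAt.continuousWithinAt

theorem strictAntiOn_potential (hφ : IsRestoringOn φ ξ s) :
    StrictAntiOn (potential φ ξ) (s ∩ Iic ξ) := by
  refine strictAntiOn_of_deriv_neg (hφ.ordConnected.inter ordConnected_Iic).convex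
    (hφ.continuousOn_potential.mono inter_subset_left) fun x hx => ?_
  rw [interior_inter, hφ.isOpen.interior_eq, interior_Iic] at hx
  rw [(hφ.hasDerivAt_potential hx.1).deriv]
  exact neg_neg_of_pos (hφ.pos_of_lt x hx.1 hx.2)

theorem strictMonoOn_potential (hφ : IsRestoringOn φ ξ s) :
    StrictMonoOn (potential φ ξ) (s ∩ Ici ξ) := by
  refine strictMonoOn_of_deriv_pos (hφ.ordConnected.inter ordConnected_Ici).convex
    (hφ.continuousOn_potential.mono inter_subset_left) fun x hx => ?_
  rw [interior_inter, hφ.isOpen.interior_eq, interior_Ici] at hx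
  rw [(hφ.hasDerivAt_potential hx.1).deriv]
  exact neg_pos_of_neg (hφ.neg_of_gt x hx.1 hx.2)

theorem potential_pos (hφ : IsRestoringOn φ ξ s) (hx : x ∈ s) (hxξ : x ≠ ξ) :
    0 < potential φ ξ x := by
  rw [← potential_self φ ξ]
  rcases hxξ.lt_or_gt with hlt | hgt
  · exact hφ.strictAntiOn_potential ⟨hx, hlt.le⟩ ⟨hφ.mem, self_mem_Iic⟩ hlt
  · exact hφ.strictMonoOn_potential ⟨hφ.mem, self_mem_Ici⟩ ⟨hx, hgt.le⟩ hgt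

theorem potential_nonneg (hφ : IsRestoringOn φ ξ s) (hx : x ∈ s) : 0 ≤ potential φ ξ x := by
  rcases eq_or_ne x ξ with rfl | hxξ
  · exact (potential_self φ x).ge
  · exact (hφ.potential_pos hx hxξ).le

theorem mem_Ioo_of_potential_lt (hφ : IsRestoringOn φ ξ s) {a b : ℝ} (ha : a ∈ s) (hb : b ∈ s)
    (hξ : ξ ∈ Icc a b) (hx : x ∈ s) (hxa : potential φ ξ x < potential φ ξ a)
    (hxb : potential φ ξ x < potential φ ξ b) : x ∈ Ioo a b := by
  constructor
  · by_contra! hle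
    exact hxa.not_ge (hφ.strictAntiOn_potential.antitoneOn ⟨hx, hle.trans hξ.1⟩ ⟨ha, hξ.1⟩ hle)
  · by_contra! hle
    exact hxb.not_ge (hφ.strictMonoOn_potential.monotoneOn ⟨hb, hξ.2⟩ ⟨hx, hξ.2.trans hle⟩ hle)

theorem tendsto_of_tendsto_potential (hφ : IsRestoringOn φ ξ s) {ι : Type*} {l : Filter ι}
    {u : ι → ℝ} (hu : ∀ i, u i ∈ s) (hlim : Tendsto (fun i => potential φ ξ (u i)) l (nhds 0)) :
    Tendsto u l (nhds ξ) := by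
  refine tendsto_def.2 fun U hU => ?_
  obtain ⟨a', b', hξ, hsub⟩ :=
    mem_nhds_iff_exists_Ioo_subset.1 (inter_mem hU (hφ.isOpen.mem_nhds hφ.mem))
  obtain ⟨a, ha', haξ⟩ := exists_between hξ.1
  obtain ⟨b, hξb, hb'⟩ := exists_between hξ.2
  have ha : a ∈ s := (hsub ⟨ha', haξ.trans hξ.2⟩).2
  have hb : b ∈ s := (hsub ⟨hξ.1.trans hξb, hb'⟩).2
  filter_upwards [hlim.eventually_lt_const (hφ.potential_pos ha haξ.ne),
    hlim.eventually_lt_const (hφ.potential_pos hb hξb.ne')] with i hia hib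
  have hi := hφ.mem_Ioo_of_potential_lt ha hb ⟨haξ.le, hξb.le⟩ (hu i) hia hib
  exact (hsub ⟨ha'.trans hi.1, hi.2.trans hb'⟩).1

end IsRestoringOn

/-- The mechanical energy `h'²/2 + ∫_h^ξ φ`. -/
def energy (φ : ℝ → ℝ) (ξ : ℝ) (h : ℝ → ℝ) (t : ℝ) : ℝ :=
  deriv h t ^ 2 / 2 + potential φ ξ (h t)

theorem potential_le_energy (φ : ℝ → ℝ) (ξ : ℝ) (h : ℝ → ℝ) (t : ℝ) :
    potential φ ξ (h t) ≤ energy φ ξ h t :=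
  le_add_of_nonneg_left (by positivity)

theorem finite_zeros_of_hasDerivAt_ne_zero {f : ℝ → ℝ} {D : Set ℝ} (hD : IsCompact D)
    (hc : Continuous f) (hf : ∀ x ∈ D, f x = 0 → ∃ d ≠ 0, HasDerivAt f d x) :
    {x ∈ D | f x = 0}.Finite := by
  by_contra hinf
  obtain ⟨x, hx, hacc⟩ := Set.Infinite.exists_accPt_of_subset_isCompact hinf hD (sep_subset D _)
  have hne : ∀ᶠ y in nhdsWithin x {x}ᶜ, f y ≠ 0 := by
    by_cases hfx : f x = 0
    · obtain ⟨d, hd, hderiv⟩ := hf x hx hfx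
      exact hderiv.eventually_ne hd
    · exact (hc.continuousAt.eventually_ne hfx).filter_mono nhdsWithin_le_nhds
  obtain ⟨y, hy, hfy⟩ := ((accPt_iff_frequently_nhdsNE.1 hacc).and_eventually hne).exists
  exact hfy hy.2

namespace IsRadialSol

variable {n : ℕ} {φ h : ℝ → ℝ} {ξ t : ℝ} {s : Set ℝ}

theorem energy_zero (hh : IsRadialSol n φ h) (ξ : ℝ) : energy φ ξ h 0 = potential φ ξ (h 0) := by
  rw [energy, hh.deriv_zero]
  ring

theorem hasDerivAt_energy (hh : IsRadialSol n φ h) (hφ : IsRestoringOn φ ξ s) (hht : h t ∈ s) :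
    HasDerivAt (energy φ ξ h) (-(n / t * deriv h t ^ 2)) t := by
  have hpot := (hφ.hasDerivAt_potential hht).comp t (hh.differentiable t).hasDerivAt
  rcases eq_or_ne t 0 with rfl | ht
  · refine (((hh.hasDerivAt_deriv_zero.pow 2).div_const 2).add hpot).congr_deriv ?_
    simp [hh.deriv_zero]
  · refine ((((hh.hasDerivAt_deriv ht).pow 2).div_const 2).add hpot).congr_deriv ?_
    simp only [Nat.cast_ofNat, Nat.add_one_sub_one, pow_one]
    ring

theorem continuous_energy (hh : IsRadialSol n φ h) (hφ : IsRestoringOn φ ξ s)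
    (hs : ∀ t, h t ∈ s) : Continuous (energy φ ξ h) :=
  continuous_iff_continuousAt.2 fun t => (hh.hasDerivAt_energy hφ (hs t)).continuousAt

theorem antitoneOn_energy (hh : IsRadialSol n φ h) (hφ : IsRestoringOn φ ξ s)
    (hs : ∀ t, h t ∈ s) : AntitoneOn (energy φ ξ h) (Ici 0) := by
  refine antitoneOn_of_hasDerivWithinAt_nonpos (convex_Ici 0)
    (hh.continuous_energy hφ hs).continuousOn
    (fun t _ => (hh.hasDerivAt_energy hφ (hs t)).hasDerivWithinAt) fun t ht => ?_
  rw [interior_Ici] at ht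
  exact neg_nonpos.2 (mul_nonneg (div_nonneg n.cast_nonneg ht.le) (sq_nonneg _))

theorem monotoneOn_energy (hh : IsRadialSol n φ h) (hφ : IsRestoringOn φ ξ s)
    (hs : ∀ t, h t ∈ s) : MonotoneOn (energy φ ξ h) (Iic 0) := by
  refine monotoneOn_of_hasDerivWithinAt_nonneg (convex_Iic 0)
    (hh.continuous_energy hφ hs).continuousOn
    (fun t _ => (hh.hasDerivAt_energy hφ (hs t)).hasDerivWithinAt) fun t ht => ?_
  rw [interior_Iic] at ht
  exact neg_nonneg.2 (mul_nonpos_of_nonpos_of_nonneg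
    (div_nonpos_of_nonneg_of_nonpos n.cast_nonneg ht.le) (sq_nonneg _))

theorem energy_le_energy_zero (hh : IsRadialSol n φ h) (hφ : IsRestoringOn φ ξ s)
    (hs : ∀ t, h t ∈ s) (t : ℝ) : energy φ ξ h t ≤ energy φ ξ h 0 :=
  (le_total 0 t).elim (fun ht => hh.antitoneOn_energy hφ hs self_mem_Ici ht ht)
    fun ht => hh.monotoneOn_energy hφ hs ht self_mem_Iic ht

theorem potential_le (hh : IsRadialSol n φ h) (hφ : IsRestoringOn φ ξ s)
    (hs : ∀ t, h t ∈ s) (t : ℝ) : potential φ ξ (h t) ≤ potential φ ξ (h 0) :=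
  (potential_le_energy φ ξ h t).trans
    ((hh.energy_le_energy_zero hφ hs t).trans_eq (hh.energy_zero ξ))

-- Friction dissipates at most the kinetic part: `E' ≥ -(2n/t) E`.
theorem monotoneOn_pow_mul_energy (hh : IsRadialSol n φ h) (hφ : IsRestoringOn φ ξ s)
    (hs : ∀ t, h t ∈ s) : MonotoneOn (fun t => t ^ (2 * n) * energy φ ξ h t) (Ici 0) := by
  have hcont := hh.continuous_energy hφ hs
  refine monotoneOn_of_hasDerivWithinAt_nonneg (convex_Ici 0) (by fun_prop)
    (fun t _ => ((hasDerivAt_pow (2 * n) t).mul (hh.hasDerivAt_energy hφ (hs t))).hasDerivWithinAt)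
    fun t ht => ?_
  rw [interior_Ici] at ht
  have ht' : t ≠ 0 := ht.ne'
  rcases n with _ | k
  · simp
  · calc (0 : ℝ) ≤ 2 * (k + 1) * t ^ (2 * k + 1) * potential φ ξ (h t) :=
          mul_nonneg (mul_nonneg (by positivity) (pow_nonneg ht.le _))
            (hφ.potential_nonneg (hs t))
      _ = _ := by
          rw [energy, show 2 * (k + 1) - 1 = 2 * k + 1 by lia]
          push_cast
          field_simp
          ring

theorem energy_pos (hh : IsRadialSol n φ h) (hφ : IsRestoringOn φ ξ s) (hs : ∀ t, h t ∈ s)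
    (h0 : h 0 ≠ ξ) (ht : 0 ≤ t) : 0 < energy φ ξ h t := by
  have hzero : 0 < energy φ ξ h 0 := by
    rw [hh.energy_zero]
    exact hφ.potential_pos (hs 0) h0
  by_contra! hneg
  rcases ht.eq_or_lt with rfl | hpos
  · exact hneg.not_gt hzero
  have hle : ∀ r ∈ Ioc 0 t, energy φ ξ h r ≤ 0 := fun r hr =>
    nonpos_of_mul_nonpos_right ((hh.monotoneOn_pow_mul_energy hφ hs hr.1.le ht hr.2).trans
      (mul_nonpos_of_nonneg_of_nonpos (by positivity) hneg)) (pow_pos hr.1 (2 * n))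
  refine hzero.not_ge (le_of_tendsto
    ((hh.continuous_energy hφ hs).continuousWithinAt (s := Ioi 0)) ?_)
  filter_upwards [Ioc_mem_nhdsGT hpos] using hle

theorem ne_of_deriv_eq_zero (hh : IsRadialSol n φ h) (hφ : IsRestoringOn φ ξ s)
    (hs : ∀ t, h t ∈ s) (h0 : h 0 ≠ ξ) (ht : 0 ≤ t) (hcrit : deriv h t = 0) : h t ≠ ξ := by
  intro heq
  have hpos := hh.energy_pos hφ hs h0 ht
  rw [energy, hcrit, heq, potential_self] at hpos
  norm_num at hpos

theorem exists_hasDerivAt_deriv_ne_zero (hh : IsRadialSol n φ h) (hφ : IsRestoringOn φ ξ s)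
    (hs : ∀ t, h t ∈ s) (h0 : h 0 ≠ ξ) (ht : 0 ≤ t) (hcrit : deriv h t = 0) :
    ∃ d ≠ 0, HasDerivAt (deriv h) d t := by
  have hforce := hφ.apply_ne_zero (hs t) (hh.ne_of_deriv_eq_zero hφ hs h0 ht hcrit)
  rcases ht.eq_or_lt with rfl | hpos
  · exact ⟨_, div_ne_zero hforce n.cast_add_one_ne_zero, hh.hasDerivAt_deriv_zero⟩
  · refine ⟨_, hforce, (hh.hasDerivAt_deriv hpos.ne').congr_deriv ?_⟩
    rw [hcrit, mul_zero, sub_zero]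

theorem finite_criticalPoints (hh : IsRadialSol n φ h) (hφ : IsRestoringOn φ ξ s)
    (hs : ∀ t, h t ∈ s) (h0 : h 0 ≠ ξ) (R : ℝ) :
    ({t | 0 < t ∧ deriv h t = 0} ∩ Iic R).Finite :=
  (finite_zeros_of_hasDerivAt_ne_zero (isCompact_Icc (a := 0) (b := R)) hh.continuous_deriv
    fun _ hr => hh.exists_hasDerivAt_deriv_ne_zero hφ hs h0 hr.1).subset
    fun _ hr => ⟨⟨hr.1.1.le, hr.2⟩, hr.1.2⟩

end IsRadialSol

end Energy

/-! ### Confining forces -/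

section Confinement

theorem potential_IccExtend {G : ℝ → ℝ} {a b ξ x : ℝ} (hab : a ≤ b) (hξ : ξ ∈ Icc a b)
    (hx : x ∈ Icc a b) :
    potential (IccExtend hab ((Icc a b).domRestrict G)) ξ x = potential G ξ x :=
  intervalIntegral.integral_congr fun _ hy =>
    IccExtend_of_mem hab _ (ordConnected_Icc.uIcc_subset hx hξ hy)

theorem IsRestoringOn.truncate {G : ℝ → ℝ} {a b ξ : ℝ} {s : Set ℝ} (hG : IsRestoringOn G ξ s)
    (hab : a ≤ b) (hs : Icc a b ⊆ s) (hξ : ξ ∈ Ioo a b) :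
    IsRestoringOn (IccExtend hab ((Icc a b).domRestrict G)) ξ univ where
  isOpen := isOpen_univ
  ordConnected := ordConnected_univ
  mem := mem_univ ξ
  continuousOn := (hG.continuousOn.mono hs).domRestrict.Icc_extend'.continuousOn
  pos_of_lt x _ hx := by
    refine hG.pos_of_lt _ (hs (projIcc a b hab x).2) ?_
    rw [coe_projIcc]
    exact max_lt hξ.1 (min_lt_of_right_lt hx)
  neg_of_gt x _ hx := by
    refine hG.neg_of_gt _ (hs (projIcc a b hab x).2) ?_
    rw [coe_projIcc]
    exact lt_max_of_lt_right (lt_min hξ.2 hx)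

/-- A strictly decreasing `C¹` force on `(0, ∞)` vanishing at `ξ`, whose potential energy is an
infinite barrier at the origin. -/
structure IsConfiningForce (G : ℝ → ℝ) (ξ : ℝ) : Prop where
  pos : 0 < ξ
  apply_eq_zero : G ξ = 0
  contDiffOn : ContDiffOn ℝ 1 G (Ioi 0)
  deriv_neg : ∀ x, 0 < x → deriv G x < 0
  barrier : Tendsto (potential G ξ) (nhdsWithin 0 (Ioi 0)) atTop

namespace IsConfiningForce

variable {G : ℝ → ℝ} {ξ x y : ℝ}

theorem strictAntiOn (hG : IsConfiningForce G ξ) : StrictAntiOn G (Ioi 0) := by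
  refine strictAntiOn_of_deriv_neg (convex_Ioi 0) hG.contDiffOn.continuousOn fun x hx => ?_
  rw [interior_Ioi] at hx
  exact hG.deriv_neg x hx

theorem isRestoringOn (hG : IsConfiningForce G ξ) : IsRestoringOn G ξ (Ioi 0) where
  isOpen := isOpen_Ioi
  ordConnected := ordConnected_Ioi
  mem := hG.pos
  continuousOn := hG.contDiffOn.continuousOn
  pos_of_lt _ hx hlt := hG.apply_eq_zero.symm.trans_lt (hG.strictAntiOn hx hG.pos hlt)
  neg_of_gt _ hx hgt := (hG.strictAntiOn hG.pos hx hgt).trans_eq hG.apply_eq_zero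

theorem locallyLipschitzOn (hG : IsConfiningForce G ξ) : LocallyLipschitzOn (Ioi 0) G :=
  hG.contDiffOn.locallyLipschitzOn (convex_Ioi 0)

theorem convexOn_potential (hG : IsConfiningForce G ξ) : ConvexOn ℝ (Ioi 0) (potential G ξ) := by
  have hderiv : ∀ x ∈ Ioi (0 : ℝ), deriv (potential G ξ) x = -G x := fun x hx =>
    (hG.isRestoringOn.hasDerivAt_potential hx).deriv
  refine MonotoneOn.convexOn_of_deriv (convex_Ioi 0) hG.isRestoringOn.continuousOn_potential ?_ ?_
    <;> rw [interior_Ioi]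
  · exact fun x hx =>
      (hG.isRestoringOn.hasDerivAt_potential hx).differentiableAt.differentiableWithinAt
  · exact hG.strictAntiOn.antitoneOn.neg.congr fun x hx => (hderiv x hx).symm

theorem neg_mul_sub_le_potential_sub (hG : IsConfiningForce G ξ) (hx : 0 < x) (hy : 0 < y) :
    -G x * (y - x) ≤ potential G ξ y - potential G ξ x := by
  have hderiv := hG.isRestoringOn.hasDerivAt_potential hx
  rcases lt_trichotomy x y with hxy | rfl | hyx
  · have hslope := hG.convexOn_potential.le_slope_of_hasDerivAt hx hy hxy hderiv
    rwa [slope_def_field, le_div_iff₀ (sub_pos.2 hxy)] at hslope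
  · simp
  · have hslope := hG.convexOn_potential.slope_le_of_hasDerivAt hy hx hyx hderiv
    rw [slope_def_field, div_le_iff₀ (sub_pos.2 hyx)] at hslope
    linarith

theorem potential_le (hG : IsConfiningForce G ξ) (hx : 0 < x) :
    potential G ξ x ≤ -(G x * (x - ξ)) := by
  have h := hG.neg_mul_sub_le_potential_sub hx hG.pos
  rw [potential_self] at h
  linarith

theorem exists_bounds (hG : IsConfiningForce G ξ) (c : ℝ) :
    ∃ a ∈ Ioo 0 ξ, ∃ b ∈ Ioi ξ, c < potential G ξ a ∧ c < potential G ξ b := by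
  obtain ⟨a, hca, ha⟩ := ((hG.barrier.eventually_gt_atTop c).and (Ioo_mem_nhdsGT hG.pos)).exists
  obtain ⟨x, hx⟩ := exists_gt ξ
  have hforce : 0 < -G x := neg_pos.2 (hG.isRestoringOn.neg_of_gt x (hG.pos.trans hx) hx)
  have hlim : Tendsto (fun y => -G x * (y - x)) atTop atTop :=
    (tendsto_id.atTop_add tendsto_const_nhds).const_mul_atTop hforce
  obtain ⟨b, hcb, hb⟩ := ((hlim.eventually_gt_atTop c).and (eventually_gt_atTop ξ)).exists
  refine ⟨a, ha, b, hb, hca, hcb.trans_le ?_⟩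
  refine (hG.neg_mul_sub_le_potential_sub (hG.pos.trans hx) (hG.pos.trans hb)).trans ?_
  exact sub_le_self _ (hG.isRestoringOn.potential_nonneg (hG.pos.trans hx))

theorem exists_isRadialSol (hG : IsConfiningForce G ξ) (n : ℕ) {η : ℝ} (hη : 0 < η) :
    ∃ h, h 0 = η ∧ (∀ t, 0 < h t) ∧ IsRadialSol n G h := by
  obtain ⟨a, ha, b, hb, hca, hcb⟩ := hG.exists_bounds (potential G ξ η)
  have hab : a ≤ b := (ha.2.trans hb).le
  have hξab : ξ ∈ Icc a b := Ioo_subset_Icc_self ⟨ha.2, hb⟩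
  have hηab := hG.isRestoringOn.mem_Ioo_of_potential_lt ha.1 (hG.pos.trans hb) hξab hη hca hcb
  have hsub : Icc a b ⊆ Ioi 0 := fun x hx => ha.1.trans_le hx.1
  have hφ := hG.isRestoringOn.truncate hab hsub ⟨ha.2, hb⟩
  obtain ⟨K, hK⟩ :=
    (hG.locallyLipschitzOn.mono hsub).exists_lipschitzOnWith_of_compact isCompact_Icc
  have hlip : LipschitzWith (K * 1) (IccExtend hab ((Icc a b).domRestrict G)) :=
    hK.to_restrict.comp (LipschitzWith.projIcc hab)
  obtain ⟨h, h0, hh⟩ := _root_.exists_isRadialSol n hlip η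
  have hmem : ∀ t, h t ∈ Ioo a b := fun t => by
    have hle := hh.potential_le hφ (fun _ => mem_univ _) t
    rw [h0, potential_IccExtend hab hξab (Ioo_subset_Icc_self hηab)] at hle
    refine hφ.mem_Ioo_of_potential_lt (mem_univ a) (mem_univ b) hξab (mem_univ _) ?_ ?_
    · rw [potential_IccExtend hab hξab (left_mem_Icc.2 hab)]
      exact hle.trans_lt hca
    · rw [potential_IccExtend hab hξab (right_mem_Icc.2 hab)]
      exact hle.trans_lt hcb
  have hcomp : IccExtend hab ((Icc a b).domRestrict G) ∘ h = G ∘ h := by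
    ext t
    exact IccExtend_of_mem hab _ (Ioo_subset_Icc_self (hmem t))
  exact ⟨h, h0, fun t => ha.1.trans (hmem t).1,
    ⟨hcomp ▸ hh.continuous_comp, fun t => hcomp ▸ hh.hasDerivAt t⟩⟩

end IsConfiningForce

end Confinement

/-! ### The first critical point -/

section FirstCriticalPoint

variable {n : ℕ} {φ G h : ℝ → ℝ} {ξ r t : ℝ}

theorem IsRadialSol.mul_sub_le (hh : IsRadialSol n φ h) {κ c : ℝ} (ht : 0 ≤ t)
    (hc : ∀ s ∈ Icc 0 t, κ * φ (h s) ≤ c) : κ * (h t - h 0) ≤ c / (n + 1) * (t ^ 2 / 2) := by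
  have hderiv : ∀ s, HasDerivAt (fun s => κ * h s - c / (n + 1) * (s ^ 2 / 2))
      (κ * (s * radialMean n (φ ∘ h) s) - c / (n + 1) * s) s := fun s => by
    refine (((hh.hasDerivAt s).const_mul κ).sub
      (((hasDerivAt_pow 2 s).div_const 2).const_mul (c / (n + 1)))).congr_deriv ?_
    norm_num
  have hanti : AntitoneOn (fun s => κ * h s - c / (n + 1) * (s ^ 2 / 2)) (Icc 0 t) := by
    refine antitoneOn_of_hasDerivWithinAt_nonpos (convex_Icc 0 t)
      (fun s _ => (hderiv s).continuousAt.continuousWithinAt)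
      (fun s _ => (hderiv s).hasDerivWithinAt) fun s hs => ?_
    have hs' : s ∈ Icc 0 t := interior_subset hs
    have hmean := radialMean_le_of_le (n := n) (hh.continuous_comp.const_mul κ) hs'.1
      fun u hu => hc u ⟨hu.1, hu.2.trans hs'.2⟩
    rw [radialMean_const_mul] at hmean
    nlinarith [mul_le_mul_of_nonneg_left hmean hs'.1]
  have hle := hanti ⟨le_rfl, ht⟩ ⟨ht, le_rfl⟩ ht
  norm_num at hle
  linarith

theorem IsRestoringOn.mul_apply_pos {s : Set ℝ} {x y : ℝ} (hφ : IsRestoringOn φ ξ s)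
    (hy : y ∈ s) (hlt : φ x * (y - ξ) < 0) : 0 < φ x * φ y := by
  rcases mul_neg_iff.1 hlt with ⟨hpos, hneg⟩ | ⟨hneg, hpos⟩
  · exact mul_pos hpos (hφ.pos_of_lt y hy (sub_neg.1 hneg))
  · exact mul_pos_of_neg_of_neg hneg (hφ.neg_of_gt y hy (sub_pos.1 hpos))

theorem IsConfiningForce.mul_apply_le_sq (hG : IsConfiningForce G ξ) {x y : ℝ} (hx : 0 < x)
    (hy : 0 < y) (hle : potential G ξ y ≤ potential G ξ x) : G x * G y ≤ G x ^ 2 := by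
  have htangent := hG.neg_mul_sub_le_potential_sub hx hy
  have hsign : 0 ≤ G x * (y - x) := by linarith
  have hanti := hG.strictAntiOn.antitoneOn
  rw [sq]
  rcases lt_trichotomy (G x) 0 with hneg | hzero | hpos
  · refine mul_le_mul_of_nonpos_left (hanti hy hx ?_) hneg.le
    exact sub_nonpos.1 (nonpos_of_mul_nonneg_right hsign hneg)
  · simp only [hzero, zero_mul, le_refl]
  · refine mul_le_mul_of_nonneg_left (hanti hx hy ?_) hpos.le
    exact sub_nonneg.1 (nonneg_of_mul_nonneg_right hsign hpos)

-- As long as `r² < 2(n+1)(h(0)-ξ)/(-G(h(0)))`, the solution has not crossed `ξ`, so the force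
-- keeps the sign of `G (h 0)` and so does `h'`.
theorem IsConfiningForce.le_sq_of_deriv_eq_zero (hG : IsConfiningForce G ξ)
    (hh : IsRadialSol n G h) (hpos : ∀ t, 0 < h t) (h0 : h 0 ≠ ξ) (hr : 0 < r)
    (hcrit : deriv h r = 0) : 2 * (n + 1) * (h 0 - ξ) / -G (h 0) ≤ r ^ 2 := by
  by_contra! hlt
  set κ := G (h 0)
  have hκ : κ ≠ 0 := hG.isRestoringOn.apply_ne_zero (hpos 0) h0
  have hκξ : κ ^ 2 / (n + 1) * (r ^ 2 / 2) < κ * (ξ - h 0) := by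
    have hscaled := mul_lt_mul_of_pos_left hlt (sq_pos_of_ne_zero hκ)
    field_simp at hscaled ⊢
    linarith
  have hforce : ∀ s ∈ Icc 0 r, 0 < κ * G (h s) := fun s hs => by
    refine hG.isRestoringOn.mul_apply_pos (hpos s) ?_
    have hle := hh.mul_sub_le (κ := κ) hs.1 fun u _ =>
      hG.mul_apply_le_sq (hpos 0) (hpos u) (hh.potential_le hG.isRestoringOn hpos u)
    have hsr : κ ^ 2 / (n + 1) * (s ^ 2 / 2) ≤ κ ^ 2 / (n + 1) * (r ^ 2 / 2) := by
      gcongr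
      exacts [hs.1, hs.2]
    linarith
  have hmean := radialMean_pos (n := n) (hh.continuous_comp.const_mul κ) hr.le hforce
  rw [radialMean_const_mul] at hmean
  refine (mul_pos hr hmean).ne' ?_
  rw [mul_left_comm, ← hh.deriv_eq, hcrit, mul_zero]

end FirstCriticalPoint

/-! ### Decay to the equilibrium -/

section Decay

variable {n : ℕ} {G h : ℝ → ℝ} {ξ : ℝ}

theorem tendsto_atBot_of_hasDerivAt_le {V V' : ℝ → ℝ} {a b : ℝ} (ha : 0 < a)
    (hV : ∀ t, 1 ≤ t → HasDerivAt V (V' t) t)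
    (hle : ∀ t, 1 ≤ t → V' t ≤ -(a / t) + b / t ^ 2) : Tendsto V atTop atBot := by
  have hderiv : ∀ t, 1 ≤ t → HasDerivAt (fun t => V t + a * Real.log t + b * t⁻¹)
      (V' t + a * t⁻¹ + b * -(t ^ 2)⁻¹) t := fun t ht =>
    have ht0 : t ≠ 0 := (zero_lt_one.trans_le ht).ne'
    ((hV t ht).add ((Real.hasDerivAt_log ht0).const_mul a)).add ((hasDerivAt_inv ht0).const_mul b)
  have hanti : AntitoneOn (fun t => V t + a * Real.log t + b * t⁻¹) (Ici 1) := by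
    refine antitoneOn_of_hasDerivWithinAt_nonpos (convex_Ici 1)
      (fun t ht => (hderiv t ht).continuousAt.continuousWithinAt)
      (fun t ht => (hderiv t (interior_subset ht)).hasDerivWithinAt) fun t ht => ?_
    have hle_t := hle t (interior_subset ht)
    rw [div_eq_mul_inv, div_eq_mul_inv] at hle_t
    linarith
  have hlog : Tendsto (fun t => -(a * Real.log t)) atTop atBot :=
    tendsto_neg_atTop_atBot.comp (Real.tendsto_log_atTop.const_mul_atTop ha)
  have hinv : Tendsto (fun t : ℝ => V 1 + b - b * t⁻¹) atTop (nhds (V 1 + b - b * 0)) :=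
    tendsto_const_nhds.sub (tendsto_inv_atTop_zero.const_mul b)
  refine tendsto_atBot_mono' atTop ?_ (hinv.add_atBot hlog)
  filter_upwards [eventually_ge_atTop 1] with t ht
  have hle_one := hanti self_mem_Ici ht ht
  simp only [Real.log_one, mul_zero, add_zero, inv_one, mul_one] at hle_one
  linarith

namespace IsConfiningForce

theorem exists_abs_sub_mul_deriv_le (hG : IsConfiningForce G ξ) (hh : IsRadialSol n G h)
    (hpos : ∀ t, 0 < h t) : ∃ C, ∀ t, |(h t - ξ) * deriv h t| ≤ C := by
  obtain ⟨a, ha, b, hb, hca, hcb⟩ := hG.exists_bounds (potential G ξ (h 0))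
  refine ⟨(b - a) * √(2 * energy G ξ h 0), fun t => ?_⟩
  have hle := hh.potential_le hG.isRestoringOn hpos t
  have hmem := hG.isRestoringOn.mem_Ioo_of_potential_lt ha.1 (hG.pos.trans hb)
    ⟨ha.2.le, (mem_Ioi.1 hb).le⟩ (hpos t) (hle.trans_lt hca) (hle.trans_lt hcb)
  have hspeed : deriv h t ^ 2 ≤ 2 * energy G ξ h 0 := by
    have henergy := hh.energy_le_energy_zero hG.isRestoringOn hpos t
    rw [energy] at henergy
    linarith [hG.isRestoringOn.potential_nonneg (hpos t)]
  rw [abs_mul]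
  refine mul_le_mul ?_ (Real.abs_le_sqrt hspeed) (abs_nonneg _) ?_
  · have hξb := mem_Ioi.1 hb
    exact abs_le.2 ⟨by linarith [hmem.1], by linarith [hmem.2, ha.2]⟩
  · exact sub_nonneg.2 (ha.2.trans hb).le

-- The virial correction `(n/2t) (h - ξ) h'` turns the dissipation `-(n/t) h'²` of the energy `E`
-- into `-(n/2t) E` up to `O(t⁻²)`, which is not integrable unless `E → 0`.
theorem exists_energy_lt (hG : IsConfiningForce G ξ) (hh : IsRadialSol n G h)
    (hpos : ∀ t, 0 < h t) (hn : n ≠ 0) {ε : ℝ} (hε : 0 < ε) : ∃ t, 0 < t ∧ energy G ξ h t < ε := by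
  by_contra! hge
  obtain ⟨C, hC⟩ := hG.exists_abs_sub_mul_deriv_le hh hpos
  set c : ℝ := n / 2 with hc
  have hc0 : 0 < c := by positivity
  have hderiv : ∀ t, 1 ≤ t → HasDerivAt
      (fun t => energy G ξ h t + c * t⁻¹ * ((h t - ξ) * deriv h t)) _ t := fun t ht =>
    have ht0 : t ≠ 0 := (zero_lt_one.trans_le ht).ne'
    (hh.hasDerivAt_energy hG.isRestoringOn (hpos t)).add
      (((hasDerivAt_inv ht0).const_mul c).mul
        (((hh.differentiable t).hasDerivAt.sub_const ξ).mul (hh.hasDerivAt_deriv ht0)))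
  have hbot := tendsto_atBot_of_hasDerivAt_le (a := c * ε) (b := c * (n + 1) * C)
    (mul_pos hc0 hε) hderiv fun t ht => ?_
  · obtain ⟨t, ht, ht1⟩ := ((hbot.eventually_lt_atBot (-(c * C))).and
      (eventually_ge_atTop 1)).exists
    have hcorr : |c * t⁻¹ * ((h t - ξ) * deriv h t)| ≤ c * 1 * C := by
      rw [abs_mul, abs_of_nonneg (by positivity)]
      gcongr
      exacts [inv_le_one_of_one_le₀ ht1, hC t]
    linarith [neg_le_of_abs_le hcorr, hge t (by linarith)]
  · have ht0 : 0 < t := zero_lt_one.trans_le ht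
    have hvirial : ε ≤ deriv h t ^ 2 - G (h t) * (h t - ξ) := by
      have := hge t ht0
      rw [energy] at this
      linarith [hG.potential_le (hpos t), sq_nonneg (deriv h t)]
    calc _ = c / t * -(deriv h t ^ 2 - G (h t) * (h t - ξ)) +
          c * (n + 1) / t ^ 2 * -((h t - ξ) * deriv h t) := by
          rw [show (n : ℝ) = 2 * c by rw [hc]; ring]
          field_simp
          ring
      _ ≤ c / t * -ε + c * (n + 1) / t ^ 2 * C := by
          gcongr
          exact neg_le.1 (neg_le_of_abs_le (hC t))
      _ = _ := by ring

theorem tendsto_atTop (hG : IsConfiningForce G ξ) (hh : IsRadialSol n G h)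
    (hpos : ∀ t, 0 < h t) (hn : n ≠ 0) : Tendsto h atTop (nhds ξ) := by
  refine hG.isRestoringOn.tendsto_of_tendsto_potential hpos (tendsto_order.2 ⟨?_, ?_⟩)
  · exact fun c hc => Eventually.of_forall fun t =>
      hc.trans_le (hG.isRestoringOn.potential_nonneg (hpos t))
  · intro ε hε
    obtain ⟨r, hr, hrε⟩ := hG.exists_energy_lt hh hpos hn hε
    filter_upwards [eventually_ge_atTop r] with t ht
    exact (potential_le_energy G ξ h t).trans_lt
      ((hh.antitoneOn_energy hG.isRestoringOn hpos hr.le (hr.le.trans ht) ht).trans_lt hrε)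

end IsConfiningForce

end Decay

/-! ### Sturm comparison -/

section Sturm

variable {Q z z' : ℝ → ℝ} {a b m r ω : ℝ} {s t : Set ℝ}

/-- `z'' = -Q z` on `s`, with `z'` the derivative of `z`. -/
structure IsOscillation (Q z z' : ℝ → ℝ) (s : Set ℝ) : Prop where
  hasDerivAt : ∀ r ∈ s, HasDerivAt z (z' r) r
  hasDerivAt' : ∀ r ∈ s, HasDerivAt z' (-(Q r * z r)) r

/-- The Wronskian of `z` and `sin (m (r - a))`. -/
def sineWronskian (z z' : ℝ → ℝ) (m a r : ℝ) : ℝ :=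
  z' r * Real.sin (m * (r - a)) - z r * (m * Real.cos (m * (r - a)))

theorem sineWronskian_self (z z' : ℝ → ℝ) (m a : ℝ) : sineWronskian z z' m a a = -(m * z a) := by
  simp [sineWronskian, mul_comm]

theorem pos_or_neg_of_ne_zero (hs : s.OrdConnected) (hz : ContinuousOn z s)
    (hne : ∀ r ∈ s, z r ≠ 0) : (∀ r ∈ s, 0 < z r) ∨ ∀ r ∈ s, 0 < -z r := by
  by_contra! hcon
  obtain ⟨⟨x, hx, hzx⟩, y, hy, hzy⟩ := hcon
  obtain ⟨w, hw, hzw⟩ := hs.isPreconnected.intermediate_value hx hy hz ⟨hzx, by linarith⟩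
  exact hne w hw hzw

theorem sin_pos_of_mem_Ioo (hm : 0 < m) (hr : r ∈ Ioo a (a + Real.pi / m)) :
    0 < Real.sin (m * (r - a)) := by
  refine Real.sin_pos_of_pos_of_lt_pi (mul_pos hm (sub_pos.2 hr.1)) ?_
  rw [mul_comm, ← lt_div_iff₀ hm]
  linarith [hr.2]

namespace IsOscillation

theorem mono (hz : IsOscillation Q z z' t) (hst : s ⊆ t) : IsOscillation Q z z' s :=
  ⟨fun r hr => hz.hasDerivAt r (hst hr), fun r hr => hz.hasDerivAt' r (hst hr)⟩

theorem neg (hz : IsOscillation Q z z' s) : IsOscillation Q (-z) (-z') s :=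
  ⟨fun r hr => (hz.hasDerivAt r hr).neg, fun r hr =>
    (hz.hasDerivAt' r hr).neg.congr_deriv (by rw [Pi.neg_apply]; ring)⟩

theorem continuousOn (hz : IsOscillation Q z z' s) : ContinuousOn z s := fun r hr =>
  (hz.hasDerivAt r hr).continuousAt.continuousWithinAt

theorem hasDerivAt_sineWronskian (hz : IsOscillation Q z z' s) (m a : ℝ) (hr : r ∈ s) :
    HasDerivAt (sineWronskian z z' m a) ((m ^ 2 - Q r) * (z r * Real.sin (m * (r - a)))) r := by
  have hphase : HasDerivAt (fun r : ℝ => m * (r - a)) m r := by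
    simpa using ((hasDerivAt_id r).sub_const a).const_mul m
  refine (((hz.hasDerivAt' r hr).mul hphase.sin).sub
    ((hz.hasDerivAt r hr).mul (hphase.cos.const_mul m))).congr_deriv ?_
  ring

theorem not_forall_pos (hz : IsOscillation Q z z' (Icc a (a + Real.pi / m))) (hm : 0 < m)
    (hQ : ∀ r ∈ Icc a (a + Real.pi / m), m ^ 2 ≤ Q r) :
    ¬∀ r ∈ Ioc a (a + Real.pi / m), 0 < z r := by
  intro hpos
  have hab : a < a + Real.pi / m := lt_add_of_pos_right a (div_pos Real.pi_pos hm)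
  have hza : 0 ≤ z a := by
    refine ge_of_tendsto ((hz.hasDerivAt a ⟨le_rfl, hab.le⟩).continuousAt.continuousWithinAt
      (s := Ioi a)) ?_
    filter_upwards [Ioc_mem_nhdsGT hab] with r hr using (hpos r hr).le
  have hanti : AntitoneOn (sineWronskian z z' m a) (Icc a (a + Real.pi / m)) := by
    refine antitoneOn_of_hasDerivWithinAt_nonpos (convex_Icc _ _)
      (fun r hr => (hz.hasDerivAt_sineWronskian m a hr).continuousAt.continuousWithinAt)
      (fun r hr => (hz.hasDerivAt_sineWronskian m a (interior_subset hr)).hasDerivWithinAt) ?_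
    rw [interior_Icc]
    exact fun r hr => mul_nonpos_of_nonpos_of_nonneg
      (sub_nonpos.2 (hQ r (Ioo_subset_Icc_self hr)))
      (mul_pos (hpos r (Ioo_subset_Ioc_self hr)) (sin_pos_of_mem_Ioo hm hr)).le
  have hle := hanti ⟨le_rfl, hab.le⟩ ⟨hab.le, le_rfl⟩ hab.le
  rw [sineWronskian_self, sineWronskian, add_sub_cancel_left, mul_div_cancel₀ _ hm.ne', Real.sin_pi,
    Real.cos_pi] at hle
  have hzb := mul_pos hm (hpos _ ⟨hab, le_rfl⟩)
  linarith [mul_nonneg hm.le hza]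

theorem exists_eq_zero (hz : IsOscillation Q z z' (Icc a (a + Real.pi / m))) (hm : 0 < m)
    (hQ : ∀ r ∈ Icc a (a + Real.pi / m), m ^ 2 ≤ Q r) :
    ∃ r ∈ Ioc a (a + Real.pi / m), z r = 0 := by
  by_contra! hne
  rcases pos_or_neg_of_ne_zero ordConnected_Ioc (hz.continuousOn.mono Ioc_subset_Icc_self) hne
    with hpos | hneg
  · exact hz.not_forall_pos hm hQ hpos
  · exact hz.neg.not_forall_pos hm hQ hneg

theorem pi_div_le_sub_of_pos (hz : IsOscillation Q z z' (Icc a b)) (hab : a < b) (hm : 0 < m)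
    (hQ : ∀ r ∈ Icc a b, Q r < m ^ 2) (hza : z a = 0) (hzb : z b = 0)
    (hpos : ∀ r ∈ Ioo a b, 0 < z r) : Real.pi / m ≤ b - a := by
  by_contra! hlt
  rw [sub_lt_iff_lt_add'] at hlt
  have hslope : z' b ≤ 0 := by
    have hlim := (hasDerivAt_iff_tendsto_slope.1 (hz.hasDerivAt b ⟨hab.le, le_rfl⟩)).mono_left
      (nhdsLT_le_nhdsNE b)
    refine le_of_tendsto hlim ?_
    filter_upwards [Ioo_mem_nhdsLT hab] with r hr
    rw [slope_def_field, hzb, sub_zero]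
    exact div_nonpos_of_nonneg_of_nonpos (hpos r hr).le (sub_nonpos.2 hr.2.le)
  have hmono : StrictMonoOn (sineWronskian z z' m a) (Icc a b) := by
    refine strictMonoOn_of_hasDerivWithinAt_pos (convex_Icc a b)
      (fun r hr => (hz.hasDerivAt_sineWronskian m a hr).continuousAt.continuousWithinAt)
      (fun r hr => (hz.hasDerivAt_sineWronskian m a (interior_subset hr)).hasDerivWithinAt) ?_
    rw [interior_Icc]
    exact fun r hr => mul_pos (sub_pos.2 (hQ r (Ioo_subset_Icc_self hr)))
      (mul_pos (hpos r hr) (sin_pos_of_mem_Ioo hm ⟨hr.1, hr.2.trans hlt⟩))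
  have hW := hmono ⟨le_rfl, hab.le⟩ ⟨hab.le, le_rfl⟩ hab
  rw [sineWronskian_self, sineWronskian, hza, hzb, mul_zero, zero_mul, sub_zero, neg_zero] at hW
  exact hW.not_ge (mul_nonpos_of_nonpos_of_nonneg hslope (sin_pos_of_mem_Ioo hm ⟨hab, hlt⟩).le)

theorem pi_div_le_sub (hz : IsOscillation Q z z' (Icc a b)) (hab : a < b) (hm : 0 < m)
    (hQ : ∀ r ∈ Icc a b, Q r < m ^ 2) (hza : z a = 0) (hzb : z b = 0)
    (hne : ∀ r ∈ Ioo a b, z r ≠ 0) : Real.pi / m ≤ b - a := by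
  rcases pos_or_neg_of_ne_zero ordConnected_Ioo (hz.continuousOn.mono Ioo_subset_Icc_self) hne
    with hpos | hneg
  · exact hz.pi_div_le_sub_of_pos hab hm hQ hza hzb hpos
  · exact hz.neg.pi_div_le_sub_of_pos hab hm hQ (neg_eq_zero.2 hza) (neg_eq_zero.2 hzb) hneg

theorem eventually_exists_eq_zero (hz : IsOscillation Q z z' (Ioi a)) (hm : 0 < m) (hmω : m < ω)
    (hQ : Tendsto Q atTop (nhds (ω ^ 2))) :
    ∀ᶠ b in atTop, ∃ r ∈ Ioc b (b + Real.pi / m), a < r ∧ z r = 0 := by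
  have hlt : m ^ 2 < ω ^ 2 := by gcongr
  obtain ⟨R, hR⟩ := eventually_atTop.1 (hQ.eventually_const_lt hlt)
  filter_upwards [eventually_ge_atTop R, eventually_gt_atTop a] with b hRb hab
  obtain ⟨r, hr, hzr⟩ := (hz.mono fun r hr => hab.trans_le hr.1).exists_eq_zero hm
    fun r hr => (hR r (hRb.trans hr.1)).le
  exact ⟨r, hr, hab.trans hr.1, hzr⟩

theorem exists_gt_eq_zero (hz : IsOscillation Q z z' (Ioi a)) (hω : 0 < ω)
    (hQ : Tendsto Q atTop (nhds (ω ^ 2))) (R : ℝ) : ∃ r, (a < r ∧ z r = 0) ∧ R < r := by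
  obtain ⟨b, ⟨r, hr, hzero⟩, hRb⟩ := ((hz.eventually_exists_eq_zero (half_pos hω)
    (half_lt_self hω) hQ).and (eventually_ge_atTop R)).exists
  exact ⟨r, hzero, hRb.trans_lt hr.1⟩

theorem tendsto_sub_zeros (hz : IsOscillation Q z z' (Ioi a)) (hω : 0 < ω)
    (hQ : Tendsto Q atTop (nhds (ω ^ 2))) {u : ℕ → ℝ} (hu : StrictMono u)
    (hrange : {r | a < r ∧ z r = 0} = range u) (htop : Tendsto u atTop atTop) :
    Tendsto (fun k => u (k + 1) - u k) atTop (nhds (Real.pi / ω)) := by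
  have hmem : ∀ k, a < u k ∧ z (u k) = 0 := fun k => hrange.ge (mem_range_self k)
  have hnext : ∀ k r, a < r ∧ z r = 0 → u k < r → u (k + 1) ≤ r := fun k r hr hkr => by
    obtain ⟨j, rfl⟩ := hrange.le hr
    exact hu.monotone (hu.lt_iff_lt.1 hkr)
  refine tendsto_order.2 ⟨fun x hx => ?_, fun x hx => ?_⟩
  · rcases le_or_gt x 0 with hx0 | hx0
    · exact Eventually.of_forall fun k => hx0.trans_lt (sub_pos.2 (hu k.lt_succ_self))
    obtain ⟨m, hωm, hmx⟩ := exists_between ((lt_div_comm₀ hx0 hω).1 hx)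
    have hm : 0 < m := hω.trans hωm
    have hlt : ω ^ 2 < m ^ 2 := by gcongr
    obtain ⟨R, hR⟩ := eventually_atTop.1 (hQ.eventually_lt_const hlt)
    filter_upwards [htop.eventually_ge_atTop R] with k hk
    refine ((lt_div_comm₀ hx0 hm).2 hmx).trans_le ?_
    refine (hz.mono fun r hr => (hmem k).1.trans_le hr.1).pi_div_le_sub (hu k.lt_succ_self) hm
      (fun r hr => hR r (hk.trans hr.1)) (hmem k).2 (hmem (k + 1)).2 fun r hr hzr => ?_
    exact (hnext k r ⟨(hmem k).1.trans hr.1, hzr⟩ hr.1).not_gt hr.2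
  · have hx0 : 0 < x := (div_pos Real.pi_pos hω).trans hx
    obtain ⟨m, hmx, hmω⟩ := exists_between ((div_lt_comm₀ hω hx0).1 hx)
    have hm : 0 < m := (div_pos Real.pi_pos hx0).trans hmx
    filter_upwards [htop.eventually (hz.eventually_exists_eq_zero hm hmω hQ)] with k hk
    obtain ⟨r, hr, hzero⟩ := hk
    have hle := hnext k r hzero hr.1
    have hlt := (div_lt_comm₀ hx0 hm).1 hmx
    linarith [hr.2]

end IsOscillation

end Sturm

section Enumeration

theorem exists_strictMono_range_eq {ι : Type*} [LinearOrder ι] [Nonempty ι] {S : Set ι}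
    (hfin : ∀ R, (S ∩ Iic R).Finite) (hunb : ∀ R, ∃ r ∈ S, R < r) :
    ∃ u : ℕ → ι, StrictMono u ∧ S = range u ∧ Tendsto u atTop atTop := by
  have hIcc : ∀ a b : S, (Icc a b).Finite := fun a b =>
    Finite.of_finite_image ((hfin b).subset (image_subset_iff.2 fun x hx => ⟨x.2, hx.2⟩))
      Subtype.val_injective.injOn
  obtain ⟨r, hr, -⟩ := hunb (Classical.arbitrary ι)
  obtain ⟨b, hb, hmin⟩ := exists_min_image _ id (hfin r) ⟨r, hr, self_mem_Iic⟩
  let : LocallyFiniteOrder S := .ofFiniteIcc hIcc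
  let : OrderBot S :=
    { bot := ⟨b, hb.1⟩
      bot_le := fun x => (le_total x.1 r).elim (fun hx => hmin x ⟨x.2, hx⟩) (hb.2.trans ·) }
  have : NoMaxOrder S := ⟨fun x => let ⟨y, hy, hxy⟩ := hunb x; ⟨⟨y, hy⟩, hxy⟩⟩
  let : SuccOrder S := LinearLocallyFiniteOrder.succOrder S
  let : PredOrder S := LinearLocallyFiniteOrder.predOrder S
  let e : ℕ ≃o S := orderIsoNatOfLinearSuccPredArch.symm
  have hrange : S = range fun k => (e k : ι) := by
    rw [range_comp' Subtype.val e, e.surjective.range_eq, image_univ, Subtype.range_coe]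
  have hmono : StrictMono fun k => (e k : ι) := fun _ _ hij => e.strictMono hij
  refine ⟨_, hmono, hrange, tendsto_atTop_atTop_of_monotone hmono.monotone fun R => ?_⟩
  obtain ⟨x, hx, hRx⟩ := hunb R
  exact ⟨e.symm ⟨x, hx⟩, by simpa using hRx.le⟩

end Enumeration

/-! ### The critical points -/

section CriticalPoints

variable {n : ℕ} {φ h : ℝ → ℝ}

/-- The coefficient `Q` of the Liouville normal form `z'' = -Q z`, `z = r ^ (n / 2) * h'`, of the
linear equation satisfied by the derivative `h'` of a radial solution. -/
def liouvilleCoeff (n : ℕ) (φ h : ℝ → ℝ) (r : ℝ) : ℝ :=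
  -deriv φ (h r) - (n : ℝ) / 2 * ((n : ℝ) / 2 + 1) / r ^ 2

theorem tendsto_liouvilleCoeff {ξ : ℝ} (hφ : ContinuousAt (deriv φ) ξ)
    (hh : Tendsto h atTop (nhds ξ)) :
    Tendsto (liouvilleCoeff n φ h) atTop (nhds (-deriv φ ξ)) := by
  have hdecay : Tendsto (fun r : ℝ => (n : ℝ) / 2 * ((n : ℝ) / 2 + 1) / r ^ 2) atTop (nhds 0) :=
    tendsto_const_nhds.div_atTop (tendsto_pow_atTop two_ne_zero)
  have hlim := (hφ.tendsto.comp hh).neg.sub hdecay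
  rwa [sub_zero] at hlim

theorem IsRadialSol.isOscillation (hh : IsRadialSol n φ h)
    (hφ : ∀ r, DifferentiableAt ℝ φ (h r)) :
    IsOscillation (liouvilleCoeff n φ h) (fun r => r ^ ((n : ℝ) / 2) * deriv h r)
      (fun r => r ^ ((n : ℝ) / 2) * (φ (h r) - n / 2 * (deriv h r / r))) (Ioi 0) where
  hasDerivAt r hr := by
    have hr : r ≠ 0 := (mem_Ioi.1 hr).ne'
    refine ((Real.hasDerivAt_rpow_const (Or.inl hr)).mul (hh.hasDerivAt_deriv hr)).congr_deriv ?_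
    rw [Real.rpow_sub_one hr]
    field_simp
    ring
  hasDerivAt' r hr := by
    have hr : r ≠ 0 := (mem_Ioi.1 hr).ne'
    have hforce : HasDerivAt (fun r => φ (h r)) (deriv φ (h r) * deriv h r) r :=
      (hφ r).hasDerivAt.comp r (hh.differentiable r).hasDerivAt
    have hfriction := ((hh.hasDerivAt_deriv hr).div (hasDerivAt_id r) hr).const_mul ((n : ℝ) / 2)
    refine ((Real.hasDerivAt_rpow_const (Or.inl hr)).mul (hforce.sub hfriction)).congr_deriv ?_
    simp only [liouvilleCoeff, id, Pi.sub_apply, Pi.div_apply]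
    rw [Real.rpow_sub_one hr]
    field_simp
    ring

theorem IsConfiningForce.exists_criticalPoints {G : ℝ → ℝ} {ξ ω : ℝ} (hG : IsConfiningForce G ξ)
    (hh : IsRadialSol n G h) (hpos : ∀ t, 0 < h t) (h0 : h 0 ≠ ξ) (hn : n ≠ 0) (hω : 0 < ω)
    (hωξ : -deriv G ξ = ω ^ 2) :
    ∃ rk : ℕ → ℝ, StrictMono rk ∧ {r | 0 < r ∧ deriv h r = 0} = range rk ∧
      Tendsto rk atTop atTop ∧
      Tendsto (fun k => rk (k + 1) - rk k) atTop (nhds (Real.pi / ω)) := by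
  have hz := hh.isOscillation fun r =>
    (hG.contDiffOn.differentiableOn one_ne_zero).differentiableAt (Ioi_mem_nhds (hpos r))
  have hzeros : {r | 0 < r ∧ r ^ ((n : ℝ) / 2) * deriv h r = 0} = {r | 0 < r ∧ deriv h r = 0} :=
    Set.ext fun r => and_congr_right fun hr => mul_eq_zero_iff_left (Real.rpow_pos_of_pos hr _).ne'
  have hQ : Tendsto (liouvilleCoeff n G h) atTop (nhds (ω ^ 2)) := by
    rw [← hωξ]
    refine tendsto_liouvilleCoeff ?_ (hG.tendsto_atTop hh hpos hn)
    exact (hG.contDiffOn.continuousOn_deriv_of_isOpen isOpen_Ioi le_rfl).continuousAt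
      (Ioi_mem_nhds hG.pos)
  obtain ⟨rk, hmono, hrange, htop⟩ := exists_strictMono_range_eq
    (hh.finite_criticalPoints hG.isRestoringOn hpos h0)
    (hzeros ▸ hz.exists_gt_eq_zero hω hQ)
  exact ⟨rk, hmono, hrange, htop,
    hz.tendsto_sub_zeros hω hQ hmono (hzeros.trans hrange) htop⟩

end CriticalPoints

/-! ### The inverse power force -/

section PowerForce

variable {α p x : ℝ}

/-- The right-hand side `(1/α) x^(-α) - p` of the radial equation. -/
def powerForce (α p x : ℝ) : ℝ :=
  1 / α * x ^ (-α) - p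

theorem hasDerivAt_powerForce (hα : α ≠ 0) (hx : x ≠ 0) :
    HasDerivAt (powerForce α p) (-x ^ (-α - 1)) x := by
  refine (((Real.hasDerivAt_rpow_const (Or.inl hx)).const_mul (1 / α)).sub_const p).congr_deriv ?_
  field_simp

theorem contDiffOn_powerForce (n : WithTop ℕ∞) : ContDiffOn ℝ n (powerForce α p) (Ioi 0) :=
  fun _ hx => ((contDiffAt_const.mul (Real.contDiffAt_rpow_const_of_ne (ne_of_gt hx))).sub
    contDiffAt_const).contDiffWithinAt

theorem inv_le_rpow_neg (hα : 1 ≤ α) (hx : 0 < x) (hx1 : x ≤ 1) : x⁻¹ ≤ x ^ (-α) := by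
  rw [← Real.rpow_neg_one]
  exact Real.rpow_le_rpow_of_exponent_ge hx hx1 (neg_le_neg hα)

-- Since `x⁻¹ ≤ x ^ (-α)` on `(0, 1]`, the potential dominates `-log x / α` up to a bounded term.
theorem tendsto_potential_powerForce {ξ : ℝ} (hα : 1 ≤ α) (hξ : 0 < ξ) :
    Tendsto (potential (powerForce α p) ξ) (nhdsWithin 0 (Ioi 0)) atTop := by
  have hα0 : 0 < α := one_pos.trans_le hα
  let V : ℝ → ℝ := fun x => potential (powerForce α p) ξ x + 1 / α * Real.log x - p * x
  have hV : ∀ x ∈ Ioc (0 : ℝ) 1, HasDerivAt V (1 / α * (x⁻¹ - x ^ (-α))) x := fun x hx => by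
    have hpot := hasDerivAt_potential isOpen_Ioi ordConnected_Ioi
      (contDiffOn_powerForce (α := α) (p := p) 0).continuousOn (mem_Ioi.2 hx.1) hξ
    refine ((hpot.add ((Real.hasDerivAt_log hx.1.ne').const_mul (1 / α))).sub
      ((hasDerivAt_id x).const_mul p)).congr_deriv ?_
    rw [powerForce]
    ring
  have hanti : AntitoneOn V (Ioc 0 1) := by
    refine antitoneOn_of_hasDerivWithinAt_nonpos (convex_Ioc 0 1)
      (fun x hx => (hV x hx).continuousAt.continuousWithinAt)
      (fun x hx => (hV x (interior_subset hx)).hasDerivWithinAt) fun x hx => ?_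
    obtain ⟨hx0, hx1⟩ := interior_subset hx
    exact mul_nonpos_of_nonneg_of_nonpos (one_div_pos.2 hα0).le
      (sub_nonpos.2 (inv_le_rpow_neg hα hx0 hx1))
  have hlog : Tendsto (fun x => 1 / α * -Real.log x) (nhdsWithin 0 (Ioi 0)) atTop :=
    (tendsto_neg_atBot_atTop.comp Real.tendsto_log_nhdsGT_zero).const_mul_atTop
      (one_div_pos.2 hα0)
  have hlin : Tendsto (fun x => V 1 + p * x) (nhdsWithin 0 (Ioi 0)) (nhds (V 1 + p * 0)) :=
    (Continuous.tendsto (by fun_prop) 0).mono_left nhdsWithin_le_nhds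
  refine tendsto_atTop_mono' _ ?_ (hlin.add_atTop hlog)
  filter_upwards [Ioc_mem_nhdsGT one_pos] with x hx
  have hle : V 1 ≤ V x := hanti hx ⟨one_pos, le_rfl⟩ hx.2
  simp only [V] at hle ⊢
  linarith

theorem rpow_neg_one_div_rpow_neg (hα : α ≠ 0) (hx : 0 ≤ x) : (x ^ (-(1 / α))) ^ (-α) = x := by
  rw [← Real.rpow_mul hx, neg_mul_neg, one_div_mul_cancel hα, Real.rpow_one]

theorem powerForce_eq_zero (hα : 0 < α) (hp : 0 < p) :
    powerForce α p ((α * p) ^ (-(1 / α))) = 0 := by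
  rw [powerForce, rpow_neg_one_div_rpow_neg hα.ne' (mul_pos hα hp).le, one_div,
    inv_mul_cancel_left₀ hα.ne', sub_self]

theorem isConfiningForce_powerForce (hα : 1 ≤ α) (hp : 0 < p) :
    IsConfiningForce (powerForce α p) ((α * p) ^ (-(1 / α))) where
  pos := Real.rpow_pos_of_pos (mul_pos (one_pos.trans_le hα) hp) _
  apply_eq_zero := powerForce_eq_zero (one_pos.trans_le hα) hp
  contDiffOn := contDiffOn_powerForce 1
  deriv_neg x hx := by
    rw [(hasDerivAt_powerForce (one_pos.trans_le hα).ne' hx.ne').deriv]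
    exact neg_neg_of_pos (Real.rpow_pos_of_pos hx _)
  barrier := tendsto_potential_powerForce hα
    (Real.rpow_pos_of_pos (mul_pos (one_pos.trans_le hα) hp) _)

theorem rpow_neg_sub_rpow_neg (hα : 0 < α) (hp : 0 < p) (η : ℝ) :
    ((α * p) ^ (-(1 / α))) ^ (-α) - η ^ (-α) = α * -powerForce α p η := by
  rw [rpow_neg_one_div_rpow_neg hα.ne' (mul_pos hα hp).le, powerForce]
  field_simp
  ring

theorem neg_deriv_powerForce (hα : 0 < α) (hp : 0 < p) :
    -deriv (powerForce α p) ((α * p) ^ (-(1 / α))) = ((α * p) ^ ((1 + α) / (2 * α))) ^ 2 := by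
  have hαp : 0 < α * p := mul_pos hα hp
  rw [(hasDerivAt_powerForce hα.ne' (Real.rpow_pos_of_pos hαp _).ne').deriv, neg_neg,
    ← Real.rpow_natCast, ← Real.rpow_mul hαp.le, ← Real.rpow_mul hαp.le]
  congr 1
  push_cast
  field_simp
  ring

theorem IsRadialSol.sqrt_le_of_deriv_eq_zero {n : ℕ} {r : ℝ} {h : ℝ → ℝ} (hα : 1 ≤ α) (hp : 0 < p)
    (hh : IsRadialSol n (powerForce α p) h) (hpos : ∀ t, 0 < h t)
    (h0 : h 0 ≠ (α * p) ^ (-(1 / α))) (hr : 0 < r) (hcrit : deriv h r = 0) :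
    Real.sqrt (2 * (n + 1 : ℕ) * α * (h 0 - (α * p) ^ (-(1 / α))) /
      (((α * p) ^ (-(1 / α))) ^ (-α) - h 0 ^ (-α))) ≤ r := by
  have hα0 : 0 < α := one_pos.trans_le hα
  rw [Real.sqrt_le_left hr.le, rpow_neg_sub_rpow_neg hα0 hp, Nat.cast_succ,
    mul_right_comm _ α, mul_comm _ α, mul_div_mul_left _ _ hα0.ne']
  exact (isConfiningForce_powerForce hα hp).le_sq_of_deriv_eq_zero hh hpos h0 hr hcrit

end PowerForce

/-! ### Global and Neumann solutions -/

section Solutions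

variable {N n : ℕ} {α p η R : ℝ} {f g h : ℝ → ℝ}

theorem locallyLipschitzOn_powerForce : LocallyLipschitzOn (Ioi 0) (powerForce α p) :=
  (contDiffOn_powerForce 1).locallyLipschitzOn (convex_Ioi 0)

theorem IsRadialSol.isGlobalSol (hh : IsRadialSol n (powerForce α p) h) (hpos : ∀ t, 0 < h t) :
    IsGlobalSol (n + 1) α p (h 0) h := by
  refine ⟨fun r _ => hpos r, hh.contDiff.contDiffOn, rfl, ?_, fun r hr => ?_⟩
  · rw [(hh.differentiable 0).derivWithin (uniqueDiffOn_Ici 0 0 self_mem_Ici), hh.deriv_zero]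
  · rw [Nat.cast_succ, add_sub_cancel_right]
    exact hh.ode (mem_Ioi.1 hr).ne'

theorem IsGlobalSol.derivWithin_Icc (hh : IsGlobalSol N α p η h) (hR : 0 < R) {r : ℝ}
    (hr : r ∈ Icc 0 R) : derivWithin h (Icc 0 R) r = derivWithin h (Ici 0) r :=
  derivWithin_subset Icc_subset_Ici_self (uniqueDiffOn_Icc hR r hr)
    (hh.2.1.differentiableOn two_ne_zero r hr.1)

theorem IsGlobalSol.isNeumannSol (hh : IsGlobalSol N α p η h) (hR : 0 < R)
    (hcrit : deriv h R = 0) : IsNeumannSol N α p R h := by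
  refine ⟨fun r hr => hh.1 r hr.1, hh.2.1.mono Icc_subset_Ici_self,
    fun r hr => hh.2.2.2.2 r hr.1, ?_, ?_⟩
  · rw [hh.derivWithin_Icc hR (left_mem_Icc.2 hR.le), hh.2.2.2.1]
  · rw [hh.derivWithin_Icc hR (right_mem_Icc.2 hR.le), derivWithin_of_mem_nhds (Ici_mem_nhds hR),
      hcrit]

theorem IsNeumannSol.isRadialSolOn (hg : IsNeumannSol N α p R g) :
    IsRadialSolOn (N - 1) (powerForce α p) R g :=
  ⟨hg.2.1, hg.2.2.1, hg.2.2.2.1⟩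

theorem IsGlobalSol.isRadialSolOn (hg : IsGlobalSol N α p η g) (hR : 0 < R) :
    IsRadialSolOn (N - 1) (powerForce α p) R g where
  contDiffOn := hg.2.1.mono Icc_subset_Ici_self
  ode r hr := hg.2.2.2.2 r hr.1
  derivWithin_zero := (hg.derivWithin_Icc hR (left_mem_Icc.2 hR.le)).trans hg.2.2.2.1

theorem IsNeumannSol.eqOn (hf : IsNeumannSol N α p R f) (hg : IsNeumannSol N α p R g)
    (hN : 1 ≤ N) (hR : 0 < R) (h0 : f 0 = g 0) : EqOn f g (Icc 0 R) :=
  hf.isRadialSolOn.eqOn hg.isRadialSolOn (sub_nonneg.2 (Nat.one_le_cast.2 hN)) hR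
    locallyLipschitzOn_powerForce hf.1 hg.1 h0

theorem IsGlobalSol.eqOn (hf : IsGlobalSol N α p η f) (hg : IsGlobalSol N α p η g)
    (hN : 1 ≤ N) : EqOn f g (Ici 0) := fun r hr => by
  have hR : 0 < r + 1 := add_pos_of_nonneg_of_pos hr one_pos
  exact (hf.isRadialSolOn hR).eqOn (hg.isRadialSolOn hR) (sub_nonneg.2 (Nat.one_le_cast.2 hN)) hR
    locallyLipschitzOn_powerForce (fun x hx => hf.1 x hx.1) (fun x hx => hg.1 x hx.1)
    (hf.2.2.1.trans hg.2.2.1.symm) ⟨hr, (lt_add_one r).le⟩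

end Solutions

theorem smooth_radial_solutions_general
    (N : ℕ) (hN : 2 ≤ N) (α p : ℝ) (hα : 1 ≤ α) (hp : 0 < p)
    (ξ : ℝ) (hξ : ξ = (α * p) ^ (-(1 / α)))
    (η : ℝ) (hη : 0 < η) (hηξ : η ≠ ξ) :
    ∃ h : ℝ → ℝ, IsGlobalSol N α p η h ∧
      (∀ h' : ℝ → ℝ, IsGlobalSol N α p η h' → ∀ r ∈ Ici (0 : ℝ), h' r = h r) ∧
      ∃ rk : ℕ → ℝ, StrictMono rk ∧ (∀ k, 0 < rk k) ∧
        {r : ℝ | 0 < r ∧ deriv h r = 0} = Set.range rk ∧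
        Tendsto rk atTop atTop ∧
        Real.sqrt (2 * N * α * (η - ξ) / (ξ ^ (-α) - η ^ (-α))) ≤ rk 0 ∧
        Tendsto (fun k => rk (k + 1) - rk k) atTop
          (nhds (Real.pi * (α * p) ^ (-((1 + α) / (2 * α))))) ∧
        ∀ k, IsNeumannSol N α p (rk k) h ∧
          ∀ g : ℝ → ℝ, IsNeumannSol N α p (rk k) g → g 0 = η →
            ∀ r ∈ Icc (0 : ℝ) (rk k), g r = h r := by
  obtain ⟨n, rfl⟩ := Nat.exists_eq_add_of_le' (one_le_two.trans hN)
  have hαp : 0 < α * p := mul_pos (one_pos.trans_le hα) hp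
  have hG := isConfiningForce_powerForce hα hp
  subst hξ
  obtain ⟨h, rfl, hpos, hh⟩ := hG.exists_isRadialSol n hη
  have hglobal := hh.isGlobalSol hpos
  obtain ⟨rk, hmono, hrange, htop, hgap⟩ := hG.exists_criticalPoints hh hpos hηξ (by omega)
    (Real.rpow_pos_of_pos hαp ((1 + α) / (2 * α))) (neg_deriv_powerForce (one_pos.trans_le hα) hp)
  have hcrit : ∀ k, 0 < rk k ∧ deriv h (rk k) = 0 := fun k => hrange.ge (mem_range_self k)
  have hneumann : ∀ k, IsNeumannSol (n + 1) α p (rk k) h := fun k =>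
    hglobal.isNeumannSol (hcrit k).1 (hcrit k).2
  rw [div_eq_mul_inv, ← Real.rpow_neg hαp.le] at hgap
  exact ⟨h, hglobal, fun f hf => hf.eqOn hglobal n.succ_pos, rk, hmono, fun k => (hcrit k).1,
    hrange, htop, hh.sqrt_le_of_deriv_eq_zero hα hp hpos hηξ (hcrit 0).1 (hcrit 0).2, hgap,
    fun k => ⟨hneumann k, fun g hg => hg.eqOn (hneumann k) n.succ_pos (hcrit k).1⟩⟩

/-- For `N ≥ 2`, `α > 1`, `p > 0`, `ξ = (αp)^(-1/α)` and any `η > 0`, `η ≠ ξ`, there is a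
unique positive `C²` solution on `[0,∞)` of the radial equation with `h(0) = η`, `h'(0) = 0`;
its positive critical points form a strictly increasing sequence `(r_k)` tending to `∞` with
`r_1 ≥ sqrt(2Nα(η-ξ)/(ξ^(-α)-η^(-α)))` and `r_{k+1} - r_k → π (αp)^(-(1+α)/(2α))`, and for
each `k` the restriction of `h` to `[0, r_k]` is the unique smooth radial Neumann solution
in `B_{r_k}(0)` with center value `η`. -/
theorem smooth_radial_solutions
    (N : ℕ) (hN : 2 ≤ N) (α p : ℝ) (hα : 1 < α) (hp : 0 < p)
    (ξ : ℝ) (hξ : ξ = (α * p) ^ (-(1 / α)))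
    (η : ℝ) (hη : 0 < η) (hηξ : η ≠ ξ) :
    ∃ h : ℝ → ℝ, IsGlobalSol N α p η h ∧
      (∀ h' : ℝ → ℝ, IsGlobalSol N α p η h' → ∀ r ∈ Ici (0 : ℝ), h' r = h r) ∧
      ∃ rk : ℕ → ℝ, StrictMono rk ∧ (∀ k, 0 < rk k) ∧
        {r : ℝ | 0 < r ∧ deriv h r = 0} = Set.range rk ∧
        Tendsto rk atTop atTop ∧
        Real.sqrt (2 * N * α * (η - ξ) / (ξ ^ (-α) - η ^ (-α))) ≤ rk 0 ∧
        Tendsto (fun k => rk (k + 1) - rk k) atTop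
          (nhds (Real.pi * (α * p) ^ (-((1 + α) / (2 * α))))) ∧
        ∀ k, IsNeumannSol N α p (rk k) h ∧
          ∀ g : ℝ → ℝ, IsNeumannSol N α p (rk k) g → g 0 = η →
            ∀ r ∈ Icc (0 : ℝ) (rk k), g r = h r :=
  smooth_radial_solutions_general N hN α p hα.le hp ξ hξ η hη hηξ
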